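/- arXiv:1402.6537 — 2 statements merged into one kernel-verified Lean document; each statement's English description precedes it below -/
import Mathlib

section
/- There exist C ≥ 0 and Δt* > 0 such that for all 0 < Δt ≤ Δt*, all q ∈ ℝⁿ and all G ∈ ℝⁿ, |R_Δt(q, q − Δt∇V(q) + √(2Δt)G) − 1 + Δt^{3/2} ξ₊(q,G)| ≤ C Δt² (1 + |G|¹²). -/
/-!
The logarithm of the Metropolis ratio at `q' = q + d` is
`½ ⟪∇V(q) + ∇V(q'), d⟫ - (V(q') - V(q)) - dt/4 (‖∇V(q')‖² - ‖∇V(q)‖²)` (`Rk_eq`).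
The first two terms form the error of the trapezoidal rule along the segment from `q` to `q'`,
which is `D³V(q)(d,d,d)/12 + O(‖d‖⁴)` (`trapezoid_line`). For `d = -dt ∇V(q) + √(2dt) g` this
contributes `dt^{3/2} (√2/6) D³V(q)(g,g,g)`, and the gradient term contributes
`-dt^{3/2} (√2/2) ⟪∇V(q), ∇²V(q) g⟫`, both up to `O(dt² (1 + ‖g‖)⁴)`. Hence the logarithm of the
ratio is `-dt^{3/2} ξ` up to that error (`logRatio_expansion`).

Since `min 1 (exp a) = exp (min 0 a) = 1 - max (-a) 0 + O(a²)` (`min_one_exp_expansion`), the claim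
follows. The constants are uniform in `q` because the derivatives of the periodic potential `V` are
continuous and periodic, hence bounded (`exists_uniform_bound`).
-/

open MeasureTheory RealInnerProductSpace

noncomputable section

abbrev En (n : ℕ) := EuclideanSpace ℝ (Fin n)

/-- Gaussian proposal density of the Euler–Maruyama scheme. -/
def Tker {n : ℕ} (V : En n → ℝ) (dt : ℝ) (q q' : En n) : ℝ :=
  (4 * Real.pi * dt) ^ (-(n : ℝ) / 2) *
    Real.exp (-‖q' - q + dt • gradient V q‖ ^ 2 / (4 * dt))

/-- Metropolis acceptance probability. -/
def Rk {n : ℕ} (V : En n → ℝ) (dt : ℝ) (q q' : En n) : ℝ :=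
  min 1 (Real.exp (-V q') * Tker V dt q' q / (Real.exp (-V q) * Tker V dt q q'))

/-- proposal move -/
def propMove {n : ℕ} (V : En n → ℝ) (dt : ℝ) (q g : En n) : En n :=
  q - dt • gradient V q + Real.sqrt (2 * dt) • g

def xi {n : ℕ} (V : En n → ℝ) (q g : En n) : ℝ :=
  -(Real.sqrt 2 / 6) * iteratedFDeriv ℝ 3 V q (fun _ => g) +
    (Real.sqrt 2 / 2) * ⟪gradient V q, fderiv ℝ (gradient V) q g⟫

def xiPlus {n : ℕ} (V : En n → ℝ) (q g : En n) : ℝ := max (xi V q g) 0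

/-- standard Gaussian measure on ℝⁿ -/
def gauss (n : ℕ) : Measure (En n) :=
  volume.withDensity fun g =>
    ENNReal.ofReal ((2 * Real.pi) ^ (-(n : ℝ) / 2) * Real.exp (-‖g‖ ^ 2 / 2))

/-- fundamental domain of the torus -/
def Box (n : ℕ) (L : ℝ) : Set (En n) := {q | ∀ i, q i ∈ Set.Ico (0 : ℝ) L}

/-- integral with respect to the Gibbs measure μ on the torus M -/
def muInt {n : ℕ} (V : En n → ℝ) (L : ℝ) (f : En n → ℝ) : ℝ :=
  (∫ q in Box n L, Real.exp (-V q))⁻¹ * ∫ q in Box n L, f q * Real.exp (-V q)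

/-- Laplacian -/
def lap {n : ℕ} (ψ : En n → ℝ) (q : En n) : ℝ :=
  ∑ i, iteratedFDeriv ℝ 2 ψ q (fun _ => EuclideanSpace.single i (1 : ℝ))

/-- generator of the overdamped Langevin dynamics -/
def gen {n : ℕ} (V ψ : En n → ℝ) (q : En n) : ℝ :=
  -⟪gradient V q, gradient ψ q⟫ + lap ψ q

/-- MALA transition operator on periodic functions -/
def Pmala {n : ℕ} (V : En n → ℝ) (dt : ℝ) (f : En n → ℝ) (q : En n) : ℝ :=
  f q + ∫ q', Rk V dt q q' * Tker V dt q q' * (f q' - f q)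

/-- the operator D₁ -/
def D1op {n : ℕ} (V ψ : En n → ℝ) (q : En n) : ℝ :=
  2 * ∑ i, ∑ j, (iteratedFDeriv ℝ 2 V q ![EuclideanSpace.single i (1:ℝ), EuclideanSpace.single j (1:ℝ)]) *
      (iteratedFDeriv ℝ 2 ψ q ![EuclideanSpace.single i (1:ℝ), EuclideanSpace.single j (1:ℝ)])
    + ⟪gradient (fun x => lap V x) q, gradient ψ q⟫
    - ⟪gradient V q, fderiv ℝ (gradient V) q (gradient ψ q)⟫

/-- the operator D₂ -/
def D2op {n : ℕ} (V ψ : En n → ℝ) (q : En n) : ℝ :=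
  -Real.sqrt 2 * ⟪∫ g, xiPlus V q g • g ∂(gauss n), gradient ψ q⟫

/-- the operator A appearing in the expansion of the MALA evolution operator -/
def Aop {n : ℕ} (V ψ : En n → ℝ) (q : En n) : ℝ :=
  (gen V (gen V ψ) q + D1op V ψ q + D2op V ψ q) / 2

/-- Metropolized increment -/
def deltaInc {n : ℕ} (V : En n → ℝ) (dt : ℝ) (q g : En n) (u : ℝ) : En n :=
  if u ≤ Rk V dt q (propMove V dt q g) then (-dt) • gradient V q + Real.sqrt (2 * dt) • g
  else 0

/-- expectation over G (std Gaussian) and U (uniform on [0,1]) of the increment -/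
def EguDelta {n : ℕ} (V : En n → ℝ) (dt : ℝ) (q : En n) : En n :=
  ∫ g, (∫ u in Set.Icc (0 : ℝ) 1, deltaInc V dt q g u) ∂(gauss n)

/-! ### Uniform bounds from periodicity -/

/-- A continuous function that is `L`-periodic in each coordinate is bounded, since every point can
be translated by periods into a fixed ball. -/
lemma bounded_of_periodic {n : ℕ} {E : Type*} [NormedAddCommGroup E] {L : ℝ} (hL : 0 < L)
    (f : En n → E) (hf : Continuous f)
    (hper : ∀ (q : En n) (i : Fin n), f (q + L • EuclideanSpace.single i (1 : ℝ)) = f q) :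
    ∃ M : ℝ, ∀ q, ‖f q‖ ≤ M := by
  have hint : ∀ (i : Fin n) (k : ℤ) (q : En n),
      f (q + (k : ℝ) • (L • EuclideanSpace.single i (1 : ℝ))) = f q := by
    intro i k q
    have hp : Function.Periodic f (L • EuclideanSpace.single i (1 : ℝ)) := fun q => hper q i
    have := hp.zsmul k q
    rwa [← Int.cast_smul_eq_zsmul ℝ] at this
  have hsum : ∀ (s : Finset (Fin n)) (k : Fin n → ℤ) (q : En n),
      f (q + ∑ i ∈ s, (k i : ℝ) • (L • EuclideanSpace.single i (1 : ℝ))) = f q := by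
    intro s k
    induction s using Finset.induction_on with
    | empty => intro q; simp
    | insert a s ha ih =>
      intro q
      rw [Finset.sum_insert ha, ← add_assoc, ih, hint]
  obtain ⟨M, hM⟩ := (isCompact_closedBall (0 : En n) (n * L)).exists_bound_of_continuousOn
    hf.continuousOn
  refine ⟨M, fun q => ?_⟩
  rw [← hsum Finset.univ (fun i => -⌊q i / L⌋) q]
  apply hM
  rw [mem_closedBall_zero_iff]
  have hq : q + ∑ i, ((-⌊q i / L⌋ : ℤ) : ℝ) • (L • EuclideanSpace.single i (1 : ℝ))
      = ∑ i, (L * Int.fract (q i / L)) • EuclideanSpace.single i (1 : ℝ) := by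
    have h0 : q = ∑ i, q i • EuclideanSpace.single i (1 : ℝ) := by
      ext j
      simp [Finset.sum_apply, Pi.single_apply]
    conv_lhs => enter [1]; rw [h0]
    rw [← Finset.sum_add_distrib]
    refine Finset.sum_congr rfl fun i _ => ?_
    rw [smul_smul, ← add_smul]
    congr 1
    rw [Int.fract]
    push_cast
    field_simp
    ring
  rw [hq]
  refine (norm_sum_le _ _).trans ?_
  calc ∑ i, ‖(L * Int.fract (q i / L)) • EuclideanSpace.single i (1 : ℝ)‖
      ≤ ∑ _i : Fin n, L := by
        refine Finset.sum_le_sum fun i _ => ?_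
        rw [norm_smul, PiLp.norm_single, norm_one, mul_one, Real.norm_eq_abs,
          abs_of_nonneg (mul_nonneg hL.le (Int.fract_nonneg _))]
        nlinarith [Int.fract_lt_one (q i / L)]
    _ = n * L := by simp

lemma fderiv_periodic {n : ℕ} {E : Type*} [NormedAddCommGroup E] [NormedSpace ℝ E]
    {f : En n → E} {a : En n} (h : ∀ q, f (q + a) = f q) (q : En n) :
    fderiv ℝ f (q + a) = fderiv ℝ f q := by
  rw [← fderiv_comp_add_right]
  congr 1
  exact funext h

lemma contDiff_gradient {n : ℕ} {V : En n → ℝ} (hV : ContDiff ℝ (⊤ : ℕ∞) V) :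
    ContDiff ℝ (⊤ : ℕ∞) (gradient V) := by
  have h : ContDiff ℝ (⊤ : ℕ∞) (fderiv ℝ V) := hV.fderiv_right (by simp)
  exact (InnerProductSpace.toDual ℝ (En n)).symm.contDiff.comp h

/-- A common bound, at least `1`, for all the derivatives of `V` entering the estimates. -/
lemma exists_uniform_bound {n : ℕ} {L : ℝ} (hL : 0 < L)
    (V : En n → ℝ) (hV : ContDiff ℝ (⊤ : ℕ∞) V)
    (hper : ∀ (q : En n) (i : Fin n), V (q + L • EuclideanSpace.single i (1 : ℝ)) = V q) :
    ∃ M : ℝ, 1 ≤ M ∧ ∀ q, ‖iteratedFDeriv ℝ 3 V q‖ ≤ M ∧ ‖iteratedFDeriv ℝ 4 V q‖ ≤ M ∧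
      ‖gradient V q‖ ≤ M ∧ ‖fderiv ℝ (gradient V) q‖ ≤ M ∧
      ‖fderiv ℝ (fderiv ℝ (gradient V)) q‖ ≤ M := by
  have hG := contDiff_gradient hV
  have hG1 : ContDiff ℝ (⊤ : ℕ∞) (fderiv ℝ (gradient V)) := hG.fderiv_right (by simp)
  have hG2 : ContDiff ℝ (⊤ : ℕ∞) (fderiv ℝ (fderiv ℝ (gradient V))) := hG1.fderiv_right (by simp)
  have pG : ∀ (q : En n) (i : Fin n),
      gradient V (q + L • EuclideanSpace.single i (1 : ℝ)) = gradient V q := by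
    intro q i
    rw [gradient, gradient, fderiv_periodic (fun q => hper q i)]
  have pG1 : ∀ (q : En n) (i : Fin n), fderiv ℝ (gradient V)
      (q + L • EuclideanSpace.single i (1 : ℝ)) = fderiv ℝ (gradient V) q :=
    fun q i => fderiv_periodic (fun q => pG q i) q
  have pG2 : ∀ (q : En n) (i : Fin n), fderiv ℝ (fderiv ℝ (gradient V))
      (q + L • EuclideanSpace.single i (1 : ℝ)) = fderiv ℝ (fderiv ℝ (gradient V)) q :=
    fun q i => fderiv_periodic (fun q => pG1 q i) q
  have pI : ∀ (k : ℕ) (q : En n) (i : Fin n), iteratedFDeriv ℝ k V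
      (q + L • EuclideanSpace.single i (1 : ℝ)) = iteratedFDeriv ℝ k V q := by
    intro k q i
    rw [← iteratedFDeriv_comp_add_right]
    congr 1
    exact funext fun q => hper q i
  have cI : ∀ k : ℕ, Continuous (iteratedFDeriv ℝ k V) := fun k =>
    hV.continuous_iteratedFDeriv (by exact_mod_cast le_top)
  obtain ⟨M1, h1⟩ := bounded_of_periodic hL _ (cI 3) (pI 3)
  obtain ⟨M2, h2⟩ := bounded_of_periodic hL _ (cI 4) (pI 4)
  obtain ⟨M3, h3⟩ := bounded_of_periodic hL _ hG.continuous pG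
  obtain ⟨M4, h4⟩ := bounded_of_periodic hL _ hG1.continuous pG1
  obtain ⟨M5, h5⟩ := bounded_of_periodic hL _ hG2.continuous pG2
  refine ⟨1 + |M1| + |M2| + |M3| + |M4| + |M5|, ?_, fun q => ?_⟩
  · linarith [abs_nonneg M1, abs_nonneg M2, abs_nonneg M3, abs_nonneg M4, abs_nonneg M5]
  have := h1 q
  have := h2 q
  have := h3 q
  have := h4 q
  have := h5 q
  refine ⟨?_, ?_, ?_, ?_, ?_⟩ <;>
    linarith [abs_nonneg M1, abs_nonneg M2, abs_nonneg M3, abs_nonneg M4, abs_nonneg M5,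
      le_abs_self M1, le_abs_self M2, le_abs_self M3, le_abs_self M4, le_abs_self M5]

/-! ### Taylor estimates -/

lemma abs_sub_le_of_deriv_le {f f' : ℝ → ℝ} {K : ℝ} (hK : 0 ≤ K)
    (hf : ∀ t, HasDerivAt f (f' t) t) (hb : ∀ t ∈ Set.Icc (0 : ℝ) 1, |f' t| ≤ K) :
    ∀ t ∈ Set.Icc (0 : ℝ) 1, |f t - f 0| ≤ K := by
  intro t ht
  have h := Convex.norm_image_sub_le_of_norm_hasDerivWithin_le (s := Set.Icc (0 : ℝ) 1)
    (fun x _ => (hf x).hasDerivWithinAt) hb (convex_Icc _ _)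
    (Set.left_mem_Icc.2 zero_le_one) ht
  rw [sub_zero, Real.norm_eq_abs, Real.norm_eq_abs, abs_of_nonneg ht.1] at h
  exact h.trans (mul_le_of_le_one_right hK ht.2)

/-- Error of the trapezoidal rule for `∫₀¹ f1`, with its leading term `f3 0 / 12`. -/
lemma trapezoid_error {f0 f1 f2 f3 f4 : ℝ → ℝ} {K : ℝ} (hK : 0 ≤ K)
    (h0 : ∀ t, HasDerivAt f0 (f1 t) t) (h1 : ∀ t, HasDerivAt f1 (f2 t) t)
    (h2 : ∀ t, HasDerivAt f2 (f3 t) t) (h3 : ∀ t, HasDerivAt f3 (f4 t) t)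
    (hb : ∀ t ∈ Set.Icc (0 : ℝ) 1, |f4 t| ≤ K) :
    |(f1 0 + f1 1) / 2 - (f0 1 - f0 0) - f3 0 / 12| ≤ 2 * K := by
  -- Each remainder below is the derivative of the next one, and all vanish at `0`.
  have b3 := abs_sub_le_of_deriv_le hK h3 hb
  have d2 : ∀ t, HasDerivAt (fun t => f2 t - t * f3 0) (f3 t - f3 0) t := fun t => by
    refine ((h2 t).sub ((hasDerivAt_id t).mul_const (f3 0))).congr_deriv ?_
    simp
  have b2 := abs_sub_le_of_deriv_le hK d2 b3
  have d1 : ∀ t, HasDerivAt (fun t => f1 t - t * f2 0 - t ^ 2 / 2 * f3 0)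
      ((f2 t - t * f3 0) - (f2 0 - 0 * f3 0)) t := fun t => by
    refine (((h1 t).sub ((hasDerivAt_id t).mul_const (f2 0))).sub
      ((((hasDerivAt_id t).pow 2).div_const 2).mul_const (f3 0))).congr_deriv ?_
    simp
    ring
  have b1 := abs_sub_le_of_deriv_le hK d1 b2
  have d0 : ∀ t, HasDerivAt
      (fun t => f0 t - t * f1 0 - t ^ 2 / 2 * f2 0 - t ^ 3 / 6 * f3 0)
      ((f1 t - t * f2 0 - t ^ 2 / 2 * f3 0) - (f1 0 - 0 * f2 0 - 0 ^ 2 / 2 * f3 0)) t :=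
    fun t => by
    refine ((((h0 t).sub ((hasDerivAt_id t).mul_const (f1 0))).sub
      ((((hasDerivAt_id t).pow 2).div_const 2).mul_const (f2 0))).sub
      ((((hasDerivAt_id t).pow 3).div_const 6).mul_const (f3 0))).congr_deriv ?_
    simp
    ring
  have b0 := abs_sub_le_of_deriv_le hK d0 b1
  have e1 := abs_le.1 (b1 1 (Set.right_mem_Icc.2 zero_le_one))
  have e0 := abs_le.1 (b0 1 (Set.right_mem_Icc.2 zero_le_one))
  rw [abs_le]
  constructor <;> linarith [e1.1, e1.2, e0.1, e0.2]

lemma hasDerivAt_iteratedFDeriv_line {n : ℕ} {V : En n → ℝ} (hV : ContDiff ℝ (⊤ : ℕ∞) V)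
    (q d : En n) (k : ℕ) (t : ℝ) :
    HasDerivAt (fun t : ℝ => iteratedFDeriv ℝ k V (q + t • d) (fun _ => d))
      (iteratedFDeriv ℝ (k + 1) V (q + t • d) (fun _ => d)) t := by
  have hd : Differentiable ℝ (iteratedFDeriv ℝ k V) :=
    hV.differentiable_iteratedFDeriv (by exact_mod_cast WithTop.coe_lt_top _)
  have hl : HasDerivAt (fun t : ℝ => q + t • d) d t := by
    simpa using ((hasDerivAt_id t).smul_const d).const_add q
  have h := (hd (q + t • d)).hasFDerivAt.comp_hasDerivAt t hl
  have h2 := ((ContinuousMultilinearMap.apply ℝ (fun _ : Fin k => En n) ℝ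
    (fun _ => d)).hasFDerivAt).comp_hasDerivAt t h
  exact h2

lemma trapezoid_line {n : ℕ} {V : En n → ℝ} (hV : ContDiff ℝ (⊤ : ℕ∞) V) {M : ℝ} (hM : 0 ≤ M)
    (hb : ∀ q, ‖iteratedFDeriv ℝ 4 V q‖ ≤ M) (q d : En n) :
    |(⟪gradient V q, d⟫ + ⟪gradient V (q + d), d⟫) / 2 - (V (q + d) - V q)
      - iteratedFDeriv ℝ 3 V q (fun _ => d) / 12| ≤ 2 * (M * ‖d‖ ^ 4) := by
  have H := trapezoid_error (K := M * ‖d‖ ^ 4) (by positivity)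
    (hasDerivAt_iteratedFDeriv_line hV q d 0) (hasDerivAt_iteratedFDeriv_line hV q d 1)
    (hasDerivAt_iteratedFDeriv_line hV q d 2) (hasDerivAt_iteratedFDeriv_line hV q d 3) ?_
  · simpa [iteratedFDeriv_one_apply] using H
  · intro t _
    refine ((iteratedFDeriv ℝ 4 V (q + t • d)).le_opNorm _).trans ?_
    simpa using mul_le_mul_of_nonneg_right (hb (q + t • d)) (by positivity : 0 ≤ ‖d‖ ^ 4)

/-- First-order Taylor expansion of a vector field with bounded second derivative. -/
lemma taylor_field {n : ℕ} {F : En n → En n} (hF : ContDiff ℝ (⊤ : ℕ∞) F) {M : ℝ}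
    (hM : 0 ≤ M) (hb : ∀ q, ‖fderiv ℝ (fderiv ℝ F) q‖ ≤ M) (q d : En n) :
    ‖F (q + d) - F q - fderiv ℝ F q d‖ ≤ M * ‖d‖ ^ 2 := by
  have hF1 : ContDiff ℝ (⊤ : ℕ∞) (fderiv ℝ F) := hF.fderiv_right (by simp)
  have h := Convex.norm_image_sub_le_of_norm_fderiv_le' (𝕜 := ℝ) (f := F)
    (φ := fderiv ℝ F q) (C := M * ‖d‖)
    (s := Metric.closedBall q ‖d‖) (x := q) (y := q + d)
    (fun x _ => hF.differentiable (by simp) x) ?_ (convex_closedBall _ _)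
    (Metric.mem_closedBall_self (norm_nonneg _)) (by simp)
  · rw [add_sub_cancel_left] at h
    linarith [h, (by ring : M * ‖d‖ * ‖d‖ = M * ‖d‖ ^ 2)]
  · intro x hx
    have h1 := Convex.norm_image_sub_le_of_norm_fderiv_le (𝕜 := ℝ) (f := fderiv ℝ F) (C := M)
      (s := Set.univ) (x := q) (y := x)
      (fun x _ => hF1.differentiable (by simp) x) (fun x _ => hb x) convex_univ
      (Set.mem_univ _) (Set.mem_univ _)
    refine h1.trans ?_
    rw [Metric.mem_closedBall, dist_eq_norm] at hx
    gcongr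

/-! ### The logarithm of the Metropolis ratio -/

/-- Logarithm of the Metropolis ratio at `q' = q + d`; it combines the trapezoidal rule error for
`V` with the increment of `‖∇V‖²`. -/
def logRatio {n : ℕ} (V : En n → ℝ) (dt : ℝ) (q d : En n) : ℝ :=
  (⟪gradient V q, d⟫ + ⟪gradient V (q + d), d⟫) / 2 - (V (q + d) - V q)
    - dt / 4 * (‖gradient V (q + d)‖ ^ 2 - ‖gradient V q‖ ^ 2)

lemma Rk_eq {n : ℕ} (V : En n → ℝ) {dt : ℝ} (hdt : 0 < dt) (q d : En n) :
    Rk V dt q (q + d) = min 1 (Real.exp (logRatio V dt q d)) := by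
  have hc : (0 : ℝ) < (4 * Real.pi * dt) ^ (-(n : ℝ) / 2) := by positivity
  have e1 : ‖q + d - q + dt • gradient V q‖ ^ 2
      = ‖d‖ ^ 2 + 2 * dt * ⟪gradient V q, d⟫ + dt ^ 2 * ‖gradient V q‖ ^ 2 := by
    rw [add_sub_cancel_left, norm_add_sq_real, inner_smul_right, norm_smul, mul_pow,
      real_inner_comm, Real.norm_eq_abs, sq_abs]
    ring
  have e2 : ‖q - (q + d) + dt • gradient V (q + d)‖ ^ 2
      = ‖d‖ ^ 2 - 2 * dt * ⟪gradient V (q + d), d⟫ + dt ^ 2 * ‖gradient V (q + d)‖ ^ 2 := by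
    rw [sub_add_cancel_left, norm_add_sq_real, inner_smul_right, norm_smul, mul_pow,
      inner_neg_left, norm_neg, real_inner_comm, Real.norm_eq_abs, sq_abs]
    ring
  rw [Rk, Tker, Tker]
  congr 1
  rw [mul_left_comm (Real.exp (-V (q + d))), mul_left_comm (Real.exp (-V q)),
    mul_div_mul_left _ _ hc.ne', ← Real.exp_add, ← Real.exp_add, ← Real.exp_sub, e1, e2, logRatio]
  congr 1
  field_simp
  ring

/-- The log-ratio equals `-h³ ξ` up to an error of order `h⁴`, where `h = √dt`. -/
lemma logRatio_expansion {n : ℕ} {V : En n → ℝ} (hV : ContDiff ℝ (⊤ : ℕ∞) V) {M : ℝ}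
    (hM : 1 ≤ M)
    (hb : ∀ q, ‖iteratedFDeriv ℝ 3 V q‖ ≤ M ∧ ‖iteratedFDeriv ℝ 4 V q‖ ≤ M ∧
      ‖gradient V q‖ ≤ M ∧ ‖fderiv ℝ (gradient V) q‖ ≤ M ∧
      ‖fderiv ℝ (fderiv ℝ (gradient V)) q‖ ≤ M)
    {h : ℝ} (h0 : 0 < h) (h1 : h ≤ 1) (q g : En n) :
    |logRatio V (h ^ 2) q (-(h ^ 2 • gradient V q) + (Real.sqrt 2 * h) • g) + h ^ 3 * xi V q g|
      ≤ 100 * M ^ 5 * h ^ 4 * (1 + ‖g‖) ^ 4 := by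
  set F := gradient V with hF
  set d := -(h ^ 2 • F q) + (Real.sqrt 2 * h) • g with hd
  set D := iteratedFDeriv ℝ 3 V q with hD
  set s := 1 + ‖g‖ with hs
  have hs1 : 1 ≤ s := by linarith [norm_nonneg g]
  have hM0 : 0 ≤ M := by linarith
  have r2 : Real.sqrt 2 ^ 2 = 2 := Real.sq_sqrt (by norm_num)
  have r2p : 0 ≤ Real.sqrt 2 := Real.sqrt_nonneg _
  have r2l : Real.sqrt 2 ≤ 2 := by nlinarith
  obtain ⟨hb3, -, hbF, hbF1, -⟩ := hb q
  have nhg : ‖(Real.sqrt 2 * h) • g‖ ≤ 2 * M * h * s := by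
    rw [norm_smul, Real.norm_eq_abs, abs_of_nonneg (by positivity)]
    calc Real.sqrt 2 * h * ‖g‖ ≤ 2 * h * s := by gcongr; linarith
      _ ≤ M * (2 * h * s) := le_mul_of_one_le_left (by positivity) hM
      _ = 2 * M * h * s := by ring
  have nhF : ‖h ^ 2 • F q‖ ≤ h ^ 2 * M := by
    rw [norm_smul, Real.norm_eq_abs, abs_of_nonneg (by positivity)]
    gcongr
  have nd : ‖d‖ ≤ 2 * M * h * s := by
    refine (norm_add_le _ _).trans ?_
    rw [norm_neg]
    have : ‖(Real.sqrt 2 * h) • g‖ ≤ 2 * h * ‖g‖ := by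
      rw [norm_smul, Real.norm_eq_abs, abs_of_nonneg (by positivity)]
      gcongr
    have e1 : h ^ 2 * M ≤ h * M := by gcongr; nlinarith
    have e2 : 2 * h * ‖g‖ ≤ M * (2 * h * ‖g‖) := le_mul_of_one_le_left (by positivity) hM
    have e3 : 0 ≤ h * M := by positivity
    calc ‖h ^ 2 • F q‖ + ‖(Real.sqrt 2 * h) • g‖ ≤ h * M + M * (2 * h * ‖g‖) := by linarith
      _ ≤ 2 * M * h * s := by rw [hs]; linarith
  have nd' : ‖d - (Real.sqrt 2 * h) • g‖ ≤ h ^ 2 * M := by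
    rw [hd, add_sub_cancel_right, norm_neg]
    exact nhF
  -- The trapezoidal error.
  have E1 := trapezoid_line hV hM0 (fun q => (hb q).2.1) q d
  -- Replacing `d` by its leading part in the cubic term.
  have E2 : |D (fun _ => d) - (Real.sqrt 2 * h) ^ 3 * D (fun _ => g)|
      ≤ M * 3 * (2 * M * h * s) ^ 2 * (h ^ 2 * M) := by
    have e := D.norm_image_sub_le (fun _ => d) (fun _ => (Real.sqrt 2 * h) • g)
    have e' : D (fun _ => (Real.sqrt 2 * h) • g) = (Real.sqrt 2 * h) ^ 3 * D (fun _ => g) := by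
      simpa using D.map_smul_univ (fun _ => Real.sqrt 2 * h) (fun _ => g)
    rw [e', Real.norm_eq_abs] at e
    refine e.trans ?_
    have c1 : ‖(fun _ => d : Fin 3 → En n)‖ = ‖d‖ := pi_norm_const d
    have c2 : ‖(fun _ => (Real.sqrt 2 * h) • g : Fin 3 → En n)‖ = ‖(Real.sqrt 2 * h) • g‖ :=
      pi_norm_const _
    have c3 : ‖(fun _ => d : Fin 3 → En n) - (fun _ => (Real.sqrt 2 * h) • g)‖
        = ‖d - (Real.sqrt 2 * h) • g‖ := pi_norm_const (d - (Real.sqrt 2 * h) • g)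
    rw [c1, c2, c3, Fintype.card_fin]
    have c4 : max ‖d‖ ‖(Real.sqrt 2 * h) • g‖ ≤ 2 * M * h * s := max_le nd nhg
    have c5 : 0 ≤ max ‖d‖ ‖(Real.sqrt 2 * h) • g‖ := le_max_of_le_left (norm_nonneg _)
    norm_num
    gcongr
  -- The increment of the squared gradient.
  set Δ := F (q + d) - F q with hΔ
  have nΔ1 : ‖Δ - fderiv ℝ F q d‖ ≤ M * (2 * M * h * s) ^ 2 := by
    refine (taylor_field (contDiff_gradient hV) hM0 (fun q => (hb q).2.2.2.2) q d).trans ?_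
    gcongr
  have nΔ2 : ‖fderiv ℝ F q d - (Real.sqrt 2 * h) • fderiv ℝ F q g‖ ≤ M * (h ^ 2 * M) := by
    rw [← map_smul, ← map_sub]
    refine ((fderiv ℝ F q).le_opNorm _).trans ?_
    gcongr
  have nΔ3 : ‖Δ‖ ≤ M * (2 * M * h * s) := by
    have e := Convex.norm_image_sub_le_of_norm_fderiv_le (𝕜 := ℝ) (f := F) (C := M)
      (s := Set.univ) (x := q) (y := q + d)
      (fun x _ => (contDiff_gradient hV).differentiable (by simp) x)
      (fun x _ => (hb x).2.2.2.1) convex_univ (Set.mem_univ _) (Set.mem_univ _)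
    rw [add_sub_cancel_left] at e
    refine e.trans ?_
    gcongr
  have E3 : |(‖F (q + d)‖ ^ 2 - ‖F q‖ ^ 2) - 2 * (Real.sqrt 2 * h) * ⟪F q, fderiv ℝ F q g⟫|
      ≤ 2 * (M * (M * (2 * M * h * s) ^ 2 + M * (h ^ 2 * M))) + (M * (2 * M * h * s)) ^ 2 := by
    have e1 : F (q + d) = F q + Δ := by rw [hΔ]; abel
    have e2 : (‖F (q + d)‖ ^ 2 - ‖F q‖ ^ 2) - 2 * (Real.sqrt 2 * h) * ⟪F q, fderiv ℝ F q g⟫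
        = 2 * ⟪F q, (Δ - fderiv ℝ F q d) + (fderiv ℝ F q d - (Real.sqrt 2 * h) • fderiv ℝ F q g)⟫
          + ‖Δ‖ ^ 2 := by
      rw [sub_add_sub_cancel, inner_sub_right, inner_smul_right, e1, norm_add_sq_real]
      ring
    rw [e2]
    refine (abs_add_le _ _).trans ?_
    rw [abs_mul, abs_two, abs_of_nonneg (sq_nonneg ‖Δ‖)]
    have e3 := (abs_real_inner_le_norm (F q)
      ((Δ - fderiv ℝ F q d) + (fderiv ℝ F q d - (Real.sqrt 2 * h) • fderiv ℝ F q g)))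
    have e4 := norm_add_le (Δ - fderiv ℝ F q d)
      (fderiv ℝ F q d - (Real.sqrt 2 * h) • fderiv ℝ F q g)
    have e5 : ‖F q‖ * ‖(Δ - fderiv ℝ F q d) +
        (fderiv ℝ F q d - (Real.sqrt 2 * h) • fderiv ℝ F q g)‖
        ≤ M * (M * (2 * M * h * s) ^ 2 + M * (h ^ 2 * M)) := by
      gcongr
      linarith
    gcongr
    linarith
  set T := (⟪F q, d⟫ + ⟪F (q + d), d⟫) / 2 - (V (q + d) - V q) with hT
  set I := ⟪F q, fderiv ℝ F q g⟫ with hI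
  have key : logRatio V (h ^ 2) q d + h ^ 3 * xi V q g
      = (T - D (fun _ => d) / 12) + (D (fun _ => d) - (Real.sqrt 2 * h) ^ 3 * D (fun _ => g)) / 12
        - h ^ 2 / 4 * ((‖F (q + d)‖ ^ 2 - ‖F q‖ ^ 2) - 2 * (Real.sqrt 2 * h) * I) := by
    have r3 : Real.sqrt 2 ^ 3 = 2 * Real.sqrt 2 := by rw [pow_succ, r2]
    rw [logRatio, xi, ← hF, ← hT, ← hI, ← hD, mul_pow, r3]
    ring
  rw [key]
  have t4 : ‖d‖ ^ 4 ≤ (2 * M * h * s) ^ 4 := by gcongr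
  have E1' : |T - D (fun _ => d) / 12| ≤ 2 * (M * (2 * M * h * s) ^ 4) :=
    E1.trans (by gcongr)
  have sum3 : |(T - D (fun _ => d) / 12)
        + (D (fun _ => d) - (Real.sqrt 2 * h) ^ 3 * D (fun _ => g)) / 12
        - h ^ 2 / 4 * ((‖F (q + d)‖ ^ 2 - ‖F q‖ ^ 2) - 2 * (Real.sqrt 2 * h) * I)|
      ≤ 2 * (M * (2 * M * h * s) ^ 4) + (M * 3 * (2 * M * h * s) ^ 2 * (h ^ 2 * M)) / 12
        + h ^ 2 / 4 * (2 * (M * (M * (2 * M * h * s) ^ 2 + M * (h ^ 2 * M)))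
          + (M * (2 * M * h * s)) ^ 2) := by
    refine (abs_sub _ _).trans (add_le_add ((abs_add_le _ _).trans (add_le_add E1' ?_)) ?_)
    · rw [abs_div, abs_of_pos (by norm_num : (0 : ℝ) < 12)]
      gcongr
    · rw [abs_mul, abs_of_nonneg (by positivity : 0 ≤ h ^ 2 / 4)]
      gcongr
  refine sum3.trans ?_
  -- All terms are `M ^ a * h ^ 4 * s ^ b` with `a ≤ 5`, `b ≤ 4`.
  have m3 : M ^ 3 ≤ M ^ 5 := pow_le_pow_right₀ hM (by norm_num)
  have m4 : M ^ 4 ≤ M ^ 5 := pow_le_pow_right₀ hM (by norm_num)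
  have s2 : s ^ 2 ≤ s ^ 4 := pow_le_pow_right₀ hs1 (by norm_num)
  have s0 : 1 ≤ s ^ 4 := one_le_pow₀ hs1
  have p1 : M ^ 4 * (h ^ 4 * s ^ 2) ≤ M ^ 5 * (h ^ 4 * s ^ 4) := by gcongr
  have p2 : M ^ 3 * (h ^ 4 * 1) ≤ M ^ 5 * (h ^ 4 * s ^ 4) := by gcongr
  have p0 : 0 ≤ M ^ 5 * (h ^ 4 * s ^ 4) := by positivity
  linarith

/-! ### From the log-ratio to the acceptance probability -/

/-- Only the negative part of the exponent matters in `min 1 (exp a)`, and `exp` is linearised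
there. -/
lemma min_one_exp_expansion (a b : ℝ) :
    |min 1 (Real.exp a) - 1 + max b 0| ≤ |a + b| + a ^ 2 := by
  have hm : min 1 (Real.exp a) = Real.exp (min 0 a) := by
    rw [Real.exp_monotone.map_min, Real.exp_zero]
  have hq : |Real.exp (min 0 a) - 1 - min 0 a| ≤ a ^ 2 := by
    have lo := Real.add_one_le_exp (min 0 a)
    rw [abs_of_nonneg (by linarith)]
    rcases le_total 0 a with ha | ha
    · rw [min_eq_left ha]
      simpa using sq_nonneg a
    · rw [min_eq_right ha]
      -- For `a ≤ 0`, `exp a = 1 / exp (-a) ≤ 1 / (1 - a) ≤ 1 + a + a ^ 2`.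
      have h1 : 1 - a ≤ Real.exp (-a) := by linarith [Real.add_one_le_exp (-a)]
      have h2 : Real.exp a * Real.exp (-a) = 1 := by rw [← Real.exp_add]; simp
      have h3 : Real.exp a * (1 - a) ≤ 1 := by
        refine le_trans ?_ h2.le
        gcongr
      have h4 : (1 : ℝ) ≤ (1 + a + a ^ 2) * (1 - a) := by
        nlinarith [mul_nonneg (neg_nonneg.2 ha) (sq_nonneg a)]
      have h5 : Real.exp a ≤ 1 + a + a ^ 2 :=
        le_of_mul_le_mul_right (h3.trans h4) (by linarith)
      linarith
  have hl : |min 0 a + max b 0| ≤ |a + b| := by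
    rcases le_total 0 a with ha | ha <;> rcases le_total 0 b with hb | hb <;>
      simp only [min_eq_left, min_eq_right, max_eq_left, max_eq_right, ha, hb] <;>
      rw [abs_le] <;> constructor <;>
      linarith [le_abs_self (a + b), neg_abs_le (a + b), abs_nonneg (a + b)]
  rw [hm]
  calc |Real.exp (min 0 a) - 1 + max b 0|
      = |(min 0 a + max b 0) + (Real.exp (min 0 a) - 1 - min 0 a)| := by ring_nf
    _ ≤ |min 0 a + max b 0| + |Real.exp (min 0 a) - 1 - min 0 a| := abs_add_le _ _
    _ ≤ |a + b| + a ^ 2 := add_le_add hl hq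

lemma abs_xi_le {n : ℕ} {V : En n → ℝ} {M : ℝ} (hM : 1 ≤ M) {q : En n}
    (h3 : ‖iteratedFDeriv ℝ 3 V q‖ ≤ M) (hF : ‖gradient V q‖ ≤ M)
    (hF1 : ‖fderiv ℝ (gradient V) q‖ ≤ M) (g : En n) :
    |xi V q g| ≤ 2 * M ^ 2 * (1 + ‖g‖) ^ 3 := by
  have hM0 : 0 ≤ M := by linarith
  have hs1 : 1 ≤ 1 + ‖g‖ := by linarith [norm_nonneg g]
  have r2p : 0 ≤ Real.sqrt 2 := Real.sqrt_nonneg _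
  have r2l : Real.sqrt 2 ≤ 2 := by nlinarith [Real.sq_sqrt (by norm_num : (0 : ℝ) ≤ 2)]
  have a1 : |iteratedFDeriv ℝ 3 V q (fun _ => g)| ≤ M ^ 2 * (1 + ‖g‖) ^ 3 := by
    have e := (iteratedFDeriv ℝ 3 V q).le_opNorm (fun _ => g)
    simp only [Finset.prod_const, Finset.card_univ, Fintype.card_fin, Real.norm_eq_abs] at e
    refine e.trans ?_
    have : M ≤ M ^ 2 := by nlinarith
    gcongr
    · linarith
    · linarith
  have a2 : |⟪gradient V q, fderiv ℝ (gradient V) q g⟫| ≤ M ^ 2 * (1 + ‖g‖) ^ 3 := by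
    refine (abs_real_inner_le_norm _ _).trans ?_
    have e : ‖fderiv ℝ (gradient V) q g‖ ≤ M * (1 + ‖g‖) ^ 3 := by
      refine ((fderiv ℝ (gradient V) q).le_opNorm _).trans ?_
      have : ‖g‖ ≤ (1 + ‖g‖) ^ 3 := by
        have := le_self_pow₀ hs1 (by norm_num : 3 ≠ 0)
        linarith
      gcongr
    calc ‖gradient V q‖ * ‖fderiv ℝ (gradient V) q g‖ ≤ M * (M * (1 + ‖g‖) ^ 3) := by gcongr
      _ = M ^ 2 * (1 + ‖g‖) ^ 3 := by ring
  rw [xi]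
  refine (abs_add_le _ _).trans ?_
  rw [abs_mul, abs_mul, abs_neg, abs_of_nonneg (by positivity : 0 ≤ Real.sqrt 2 / 6),
    abs_of_nonneg (by positivity : 0 ≤ Real.sqrt 2 / 2)]
  have b1 : Real.sqrt 2 / 6 * |iteratedFDeriv ℝ 3 V q (fun _ => g)|
      ≤ 1 * (M ^ 2 * (1 + ‖g‖) ^ 3) := by
    gcongr
    linarith
  have b2 : Real.sqrt 2 / 2 * |⟪gradient V q, fderiv ℝ (gradient V) q g⟫|
      ≤ 1 * (M ^ 2 * (1 + ‖g‖) ^ 3) := by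
    gcongr
    linarith
  linarith

theorem stmt1 (n : ℕ) (hn : 1 ≤ n) (L : ℝ) (hL : 0 < L)
    (V : En n → ℝ) (hV : ContDiff ℝ (⊤ : ℕ∞) V)
    (hper : ∀ (q : En n) (i : Fin n), V (q + L • EuclideanSpace.single i (1 : ℝ)) = V q) :
    ∃ C ≥ (0 : ℝ), ∃ dts > (0 : ℝ), ∀ dt : ℝ, 0 < dt → dt ≤ dts → ∀ q g : En n,
      |Rk V dt q (propMove V dt q g) - 1 + dt ^ ((3 : ℝ) / 2) * xiPlus V q g| ≤
        C * dt ^ 2 * (1 + ‖g‖ ^ 12) := by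
  obtain ⟨M, hM, hb⟩ := exists_uniform_bound hL V hV hper
  have hM0 : 0 ≤ M := by linarith
  set A : ℝ := 100 * M ^ 5 with hA
  set B : ℝ := 2 * M ^ 2 with hB
  have hA0 : 0 ≤ A := by positivity
  have hB0 : 0 ≤ B := by positivity
  refine ⟨(A + (A + B) ^ 2) * 2 ^ 11, by positivity, 1, one_pos, fun dt hdt hdt1 q g => ?_⟩
  obtain ⟨h, h0, rfl⟩ : ∃ h : ℝ, 0 < h ∧ h ^ 2 = dt :=
    ⟨Real.sqrt dt, Real.sqrt_pos.2 hdt, Real.sq_sqrt hdt.le⟩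
  have h1 : h ≤ 1 := by nlinarith
  have hpow : (h ^ 2) ^ ((3 : ℝ) / 2) = h ^ 3 := by
    rw [← Real.rpow_natCast h 2, ← Real.rpow_mul h0.le, ← Real.rpow_natCast h 3]
    norm_num
  have hsqrt : Real.sqrt (2 * h ^ 2) = Real.sqrt 2 * h := by
    rw [Real.sqrt_mul (by norm_num), Real.sqrt_sq h0.le]
  set d := -(h ^ 2 • gradient V q) + (Real.sqrt 2 * h) • g with hd
  have hprop : propMove V (h ^ 2) q g = q + d := by
    rw [propMove, hsqrt, hd]
    abel
  set a := logRatio V (h ^ 2) q d with ha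
  set s := 1 + ‖g‖ with hs
  have hs1 : 1 ≤ s := by linarith [norm_nonneg g]
  have hexp : |a + h ^ 3 * xi V q g| ≤ A * h ^ 4 * s ^ 4 :=
    logRatio_expansion hV hM hb h0 h1 q g
  have hxi : |xi V q g| ≤ B * s ^ 3 :=
    abs_xi_le hM (hb q).1 (hb q).2.2.1 (hb q).2.2.2.1 g
  have hmax : h ^ 3 * xiPlus V q g = max (h ^ 3 * xi V q g) 0 := by
    rw [xiPlus, mul_max_of_nonneg _ _ (by positivity), mul_zero]
  -- Since `|a| = O(h³)`, the quadratic error `a²` is `O(h⁶)`, hence `O(dt²)`.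
  have habs : |a| ≤ (A + B) * h ^ 2 * s ^ 4 := by
    have e1 : |a| ≤ |a + h ^ 3 * xi V q g| + |h ^ 3 * xi V q g| := by
      have e := abs_sub (a + h ^ 3 * xi V q g) (h ^ 3 * xi V q g)
      rwa [add_sub_cancel_right] at e
    have e2 : |h ^ 3 * xi V q g| ≤ h ^ 2 * (B * s ^ 4) := by
      rw [abs_mul, abs_of_nonneg (by positivity : 0 ≤ h ^ 3)]
      have f1 : h ^ 3 ≤ h ^ 2 := pow_le_pow_of_le_one h0.le h1 (by norm_num)
      have f2 : s ^ 3 ≤ s ^ 4 := pow_le_pow_right₀ hs1 (by norm_num)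
      refine mul_le_mul f1 (hxi.trans ?_) (abs_nonneg _) (by positivity)
      gcongr
    have e3 : A * h ^ 4 * s ^ 4 ≤ A * h ^ 2 * s ^ 4 := by
      have f1 : h ^ 4 ≤ h ^ 2 := pow_le_pow_of_le_one h0.le h1 (by norm_num)
      gcongr
    linarith
  have hsq : a ^ 2 ≤ (A + B) ^ 2 * h ^ 4 * s ^ 12 := by
    have e : a ^ 2 ≤ ((A + B) * h ^ 2 * s ^ 4) ^ 2 := by
      rw [← sq_abs]
      gcongr
    have f : s ^ 8 ≤ s ^ 12 := pow_le_pow_right₀ hs1 (by norm_num)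
    calc a ^ 2 ≤ (A + B) ^ 2 * h ^ 4 * s ^ 8 := by linarith
      _ ≤ (A + B) ^ 2 * h ^ 4 * s ^ 12 := by gcongr
  have hlin : A * h ^ 4 * s ^ 4 ≤ A * h ^ 4 * s ^ 12 := by
    have f : s ^ 4 ≤ s ^ 12 := pow_le_pow_right₀ hs1 (by norm_num)
    gcongr
  have hs12 : s ^ 12 ≤ 2 ^ 11 * (1 + ‖g‖ ^ 12) := by
    have := add_pow_le (zero_le_one' ℝ) (norm_nonneg g) 12
    simpa using this
  rw [hpow, hprop, Rk_eq V (by positivity), hmax]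
  calc |min 1 (Real.exp a) - 1 + max (h ^ 3 * xi V q g) 0|
      ≤ |a + h ^ 3 * xi V q g| + a ^ 2 := min_one_exp_expansion _ _
    _ ≤ (A + (A + B) ^ 2) * h ^ 4 * s ^ 12 := by linarith
    _ ≤ (A + (A + B) ^ 2) * h ^ 4 * (2 ^ 11 * (1 + ‖g‖ ^ 12)) := by gcongr
    _ = (A + (A + B) ^ 2) * 2 ^ 11 * (h ^ 2) ^ 2 * (1 + ‖g‖ ^ 12) := by ring
end
end

section
/- There exist K > 0 and Δt* > 0 such that for all 0 < Δt ≤ Δt* and every bounded measurable L-periodic function f : ℝⁿ → ℝ with ∫_M f dμ = 0, the series g = ∑_{n=0}^∞ P_Δtⁿ f converges in the supremum norm, satisfies (Id − P_Δt) g = f and ∫_M g dμ = 0, and obeys the bound Δt ‖g‖_∞ ≤ K ‖f‖_∞. -/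
/-!
The operator `P = Pmala V dt` is Markov, so convergence and the bound `dt ‖g‖ ≤ K ‖f‖` reduce to a
contraction of the oscillation of `P^N`, for `N = ⌈1/dt⌉` steps, by a factor `1 - ε` with `ε`
independent of `dt`.

The contraction comes from a comparison with the heat semigroup `H_t`. Taylor expansion of the
Metropolis ratio bounds the accepted density from below by
`heat dt d * exp (-⟨∇V, d⟩ / 2 - c (|d|² + dt))`, where `d` is the displacement (`accK_lower`).
By Cauchy–Schwarz and an explicit Gaussian integral this gives
`(H_dt g)² ≤ exp (C dt) * P (g²)` (`step_compare`): the term linear in `d` costs only `O(dt)` since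
the Gaussian is centred. Iterating with the semigroup property gives
`(H_T g)² ≤ exp (C T) * P^N (g²)` for `T = N dt ∈ [1, 2]` (`iter_compare`), and the heat kernel at
such times is bounded below on a period cell (`Hop_lower`). Applied to `f`, rescaled to take values
in `[0, 1]`, or to its complement, whichever has mean at least `1/2` over the cell, this yields
`contraction`.

Detailed balance makes the Gibbs measure invariant (`Pmala_invariant`), so a mean-zero `f` keeps mean
zero under the iterates, which are then bounded by their oscillation:
`|P^k f| ≤ 2 ‖f‖ (1 - ε)^⌊k/N⌋`. Summing (`sum_pow_div`) gives `‖g‖ ≤ 2 ‖f‖ N / ε`, hence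
`K = 4 / ε` since `N dt ≤ 2`.
-/

open MeasureTheory RealInnerProductSpace

noncomputable section

/-! ### Periodic functions and the period cell -/

/-- `L`-periodicity in each coordinate, as in the hypotheses on `V` and `f`. -/
def Per {n : ℕ} {β : Type*} (L : ℝ) (f : En n → β) : Prop :=
  ∀ (q : En n) (i : Fin n), f (q + L • EuclideanSpace.single i (1 : ℝ)) = f q

/-- The basis `L • eᵢ` of `ℝⁿ`; its integer span is the period lattice. -/
def latB (n : ℕ) {L : ℝ} (hL : 0 < L) : Module.Basis (Fin n) ℝ (En n) :=
  (EuclideanSpace.basisFun (Fin n) ℝ).toBasis.isUnitSMul (fun _ => (IsUnit.mk0 L hL.ne'))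

lemma latB_apply {n : ℕ} {L : ℝ} (hL : 0 < L) (i : Fin n) :
    latB n hL i = L • EuclideanSpace.single i (1 : ℝ) := by
  simp [latB, Module.Basis.isUnitSMul_apply]

lemma latB_repr {n : ℕ} {L : ℝ} (hL : 0 < L) (q : En n) (i : Fin n) :
    (latB n hL).repr q i = L⁻¹ * q i := by
  simp [latB, Module.Basis.repr_isUnitSMul, Units.smul_def]

/-- The half-open cell is the fundamental domain of the period lattice. -/
lemma box_eq {n : ℕ} {L : ℝ} (hL : 0 < L) :
    Box n L = ZSpan.fundamentalDomain (latB n hL) := by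
  ext q
  simp only [Box, Set.mem_ofPred_eq, ZSpan.mem_fundamentalDomain, latB_repr, Set.mem_Ico]
  refine forall_congr' fun i => ?_
  rw [inv_mul_lt_iff₀ hL, mul_one]
  refine and_congr_left fun _ => ?_
  constructor
  · intro h; positivity
  · intro h; exact nonneg_of_mul_nonneg_right h (by positivity)

/-- Periodicity under the generators gives invariance under the whole lattice. -/
lemma Per.span {n : ℕ} {β : Type*} {L : ℝ} (hL : 0 < L) {f : En n → β} (hf : Per L f)
    {v : En n} (hv : v ∈ Submodule.span ℤ (Set.range (latB n hL))) :
    ∀ q, f (v + q) = f q := by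
  induction hv using Submodule.span_induction with
  | mem x h =>
    obtain ⟨i, rfl⟩ := h
    intro q
    rw [add_comm, latB_apply, hf]
  | zero => intro q; rw [zero_add]
  | add x y _ _ hx hy => intro q; rw [add_assoc, hx, hy]
  | smul a x _ hx =>
    have hn : ∀ (m : ℕ) q, f (m • x + q) = f q := by
      intro m
      induction m with
      | zero => intro q; simp
      | succ m ih => intro q; rw [succ_nsmul, add_assoc, ih, hx]
    intro q
    obtain ⟨m, rfl | rfl⟩ := a.eq_nat_or_neg
    · simpa using hn m q
    · have := hn m (-(m • x) + q)
      rw [add_neg_cancel_left] at this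
      simpa using this.symm

lemma box_meas {n : ℕ} {L : ℝ} (hL : 0 < L) : MeasurableSet (Box n L) := by
  rw [box_eq hL]; exact ZSpan.fundamentalDomain_measurableSet _

lemma box_bdd {n : ℕ} {L : ℝ} (hL : 0 < L) : Bornology.IsBounded (Box n L) := by
  rw [box_eq hL]; exact ZSpan.fundamentalDomain_isBounded _

lemma box_fin {n : ℕ} {L : ℝ} (hL : 0 < L) : volume (Box n L) < ⊤ := (box_bdd hL).measure_lt_top

lemma box_pos {n : ℕ} {L : ℝ} (hL : 0 < L) : 0 < volume.real (Box n L) := by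
  refine ENNReal.toReal_pos ?_ (box_fin hL).ne
  rw [box_eq hL]; exact ZSpan.measure_fundamentalDomain_ne_zero _

/-- Translation invariance of the integral over one period cell. -/
lemma Per.integral_translate {n : ℕ} {L : ℝ} (hL : 0 < L) {f : En n → ℝ} (hf : Per L f)
    (d : En n) : ∫ q in Box n L, f (d + q) = ∫ q in Box n L, f q := by
  have h1 : IsAddFundamentalDomain (Submodule.span ℤ (Set.range (latB n hL))).toAddSubgroup (Box n L)
      (volume : Measure (En n)) := by
    rw [box_eq hL]; exact ZSpan.isAddFundamentalDomain' _ _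
  have h2 := h1.vadd_of_comm d
  have : Countable (Submodule.span ℤ (Set.range (latB n hL))).toAddSubgroup :=
    inferInstanceAs (Countable (Submodule.span ℤ (Set.range (latB n hL))))
  rw [h1.setIntegral_eq h2 (f := f) (fun g x => hf.span hL g.2 x)]
  exact ((measurePreserving_add_left volume d).setIntegral_image_emb
    (measurableEmbedding_addLeft d) f (Box n L)).symm

lemma Per.bounded {n : ℕ} {β : Type*} [SeminormedAddCommGroup β] {L : ℝ} (hL : 0 < L)
    {f : En n → β} (hf : Per L f) (hc : Continuous f) : ∃ C, 0 ≤ C ∧ ∀ q, ‖f q‖ ≤ C := by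
  have hcomp : IsCompact (closure (Box n L)) := (box_bdd hL).isCompact_closure
  obtain ⟨C, hC⟩ := hcomp.exists_bound_of_continuousOn hc.continuousOn
  refine ⟨max C 0, le_max_right _ _, fun q => le_max_of_le_left ?_⟩
  have h1 : ZSpan.fract (latB n hL) q ∈ Box n L := by
    rw [box_eq hL]; exact ZSpan.fract_mem_fundamentalDomain _ _
  have h2 : f q = f (ZSpan.fract (latB n hL) q) := by
    have := hf.span hL (ZSpan.floor (latB n hL) q).2 (ZSpan.fract (latB n hL) q)
    rw [ZSpan.fract_apply, add_sub_cancel] at this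
    rw [this, ZSpan.fract_apply]
  rw [h2]
  exact hC _ (subset_closure h1)

lemma gradient_contDiff {n : ℕ} {V : En n → ℝ} (hV : ContDiff ℝ (⊤ : ℕ∞) V) :
    ContDiff ℝ 1 (gradient V) := by
  have h : ContDiff ℝ 1 (fderiv ℝ V) := hV.fderiv_right (by norm_cast)
  exact (InnerProductSpace.toDual ℝ (En n)).symm.contDiff.comp h

lemma Per.gradient {n : ℕ} {L : ℝ} {V : En n → ℝ} (hper : Per L V) : Per L (gradient V) := by
  intro q i
  simp only [_root_.gradient]
  congr 1
  rw [← fderiv_comp_add_right]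
  congr 1
  funext x
  exact hper x i

lemma Per.fderivE {n : ℕ} {L : ℝ} {F : En n → En n} (hper : Per L F) : Per L (fderiv ℝ F) := by
  intro q i
  rw [← fderiv_comp_add_right]
  congr 1
  funext x
  exact hper x i

/-- Global bounds on a periodic potential: bounded gradient, Lipschitz gradient, and
the second order Taylor estimate. -/
lemma potential_bounds {n : ℕ} {L : ℝ} (hL : 0 < L) {V : En n → ℝ}
    (hV : ContDiff ℝ (⊤ : ℕ∞) V) (hper : Per L V) :
    ∃ G M : ℝ, 0 ≤ G ∧ 0 ≤ M ∧ (∀ q, ‖gradient V q‖ ≤ G) ∧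
      (∀ q q', ‖gradient V q' - gradient V q‖ ≤ M * ‖q' - q‖) ∧
      (∀ q q', |V q' - V q - ⟪gradient V q, q' - q⟫| ≤ M * ‖q' - q‖ ^ 2) := by
  have hg := gradient_contDiff hV
  obtain ⟨G, hG0, hG⟩ := hper.gradient.bounded hL hg.continuous
  obtain ⟨M, hM0, hM⟩ := hper.gradient.fderivE.bounded hL (hg.continuous_fderiv one_ne_zero)
  have hlip : ∀ q q', ‖gradient V q' - gradient V q‖ ≤ M * ‖q' - q‖ := fun q q' =>
    convex_univ.norm_image_sub_le_of_norm_fderiv_le (𝕜 := ℝ)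
      (fun x _ => (hg.differentiable one_ne_zero) x) (fun x _ => hM x) (Set.mem_univ q) (Set.mem_univ q')
  refine ⟨G, M, hG0, hM0, hG, hlip, fun q q' => ?_⟩
  have hVd : Differentiable ℝ V := hV.differentiable (by simp)
  have h := (convex_segment q q').norm_image_sub_le_of_norm_fderiv_le' (𝕜 := ℝ) (f := V)
    (φ := fderiv ℝ V q) (C := M * ‖q' - q‖) (fun x _ => hVd x) (fun x hx => ?_)
    (left_mem_segment ℝ q q') (right_mem_segment ℝ q q')
  · have h3 : fderiv ℝ V q (q' - q) = ⟪gradient V q, q' - q⟫ := by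
      simp [_root_.gradient]
    rw [h3, Real.norm_eq_abs] at h
    calc _ ≤ _ := h
      _ = _ := by ring
  · have h3 : ‖fderiv ℝ V x - fderiv ℝ V q‖ = ‖gradient V x - gradient V q‖ := by
      simp only [_root_.gradient]
      rw [← map_sub, LinearIsometryEquiv.norm_map]
    rw [h3]
    refine (hlip q x).trans (mul_le_mul_of_nonneg_left ?_ hM0)
    exact norm_sub_le_of_mem_segment hx

/-! ### Gaussian integrals and the heat semigroup -/

lemma gauss_integral {n : ℕ} {b : ℝ} (hb : 0 < b) (w : En n) :
    Integrable (fun v : En n => Real.exp (-b * ‖v‖ ^ 2 + ⟪w, v⟫)) ∧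
    ∫ v : En n, Real.exp (-b * ‖v‖ ^ 2 + ⟪w, v⟫)
      = (Real.pi / b) ^ ((n : ℝ) / 2) * Real.exp (‖w‖ ^ 2 / (4 * b)) := by
  have hval : ∫ v : En n, Real.exp (-b * ‖v‖ ^ 2 + ⟪w, v⟫)
      = (Real.pi / b) ^ ((n : ℝ) / 2) * Real.exp (‖w‖ ^ 2 / (4 * b)) := by
    have h0 := GaussianFourier.integral_rexp_neg_mul_sq_norm (V := En n) hb
    rw [finrank_euclideanSpace_fin] at h0
    rw [← h0, ← integral_add_right_eq_self _ ((1 / (2 * b)) • w), ← integral_mul_const]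
    congr 1
    funext v
    rw [← Real.exp_add]
    congr 1
    rw [norm_add_sq_real, inner_add_right, real_inner_smul_right, real_inner_smul_right, norm_smul,
      real_inner_comm, real_inner_self_eq_norm_sq, mul_pow, Real.norm_eq_abs, sq_abs]
    field_simp
    ring
  refine ⟨Integrable.of_integral_ne_zero ?_, hval⟩
  rw [hval]
  positivity

/-- The centred Gaussian density of covariance `2t`, i.e. the heat kernel at time `t`. -/
def heat {n : ℕ} (t : ℝ) (z : En n) : ℝ :=
  (4 * Real.pi * t) ^ (-(n : ℝ) / 2) * Real.exp (-‖z‖ ^ 2 / (4 * t))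

/-- The heat semigroup `g ↦ heat t * g`. -/
def Hop {n : ℕ} (t : ℝ) (g : En n → ℝ) (x : En n) : ℝ := ∫ y, heat t (y - x) * g y

lemma heat_pos {n : ℕ} {t : ℝ} (ht : 0 < t) (z : En n) : 0 < heat t z := by
  unfold heat; positivity

lemma heat_cont {n : ℕ} (t : ℝ) : Continuous (heat t : En n → ℝ) := by
  unfold heat; fun_prop

lemma heat_prefactor {n : ℕ} {t b : ℝ} (ht : 0 < t) (hb : 0 < b) :
    (4 * Real.pi * t) ^ (-(n : ℝ) / 2) * (Real.pi / b) ^ ((n : ℝ) / 2)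
      = (4 * t * b) ^ (-(n : ℝ) / 2) := by
  have h : (Real.pi / b) = (b / Real.pi)⁻¹ := by rw [inv_div]
  rw [h, Real.inv_rpow (by positivity), ← Real.rpow_neg (by positivity), ← neg_div,
    ← Real.mul_rpow (by positivity) (by positivity)]
  congr 1
  field_simp

lemma heat_integral {n : ℕ} {t : ℝ} (ht : 0 < t) :
    Integrable (heat t : En n → ℝ) ∧ ∫ z : En n, heat t z = 1 := by
  have hb : 0 < 1 / (4 * t) := by positivity
  obtain ⟨h1, h2⟩ := gauss_integral (n := n) hb 0
  have he : (heat t : En n → ℝ) = fun z => (4 * Real.pi * t) ^ (-(n : ℝ) / 2) *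
      Real.exp (-(1 / (4 * t)) * ‖z‖ ^ 2 + ⟪(0 : En n), z⟫) := by
    funext z
    unfold heat
    rw [inner_zero_left]
    congr 2
    field_simp
    ring
  rw [he]
  refine ⟨h1.const_mul _, ?_⟩
  rw [integral_const_mul, h2, ← mul_assoc, heat_prefactor ht hb]
  have : 4 * t * (1 / (4 * t)) = 1 := by field_simp
  rw [this]
  simp

lemma heat_integrable_sub {n : ℕ} {t : ℝ} (ht : 0 < t) (x : En n) :
    Integrable (fun y => heat t (y - x)) :=
  (heat_integral ht).1.comp_sub_right x

lemma heat_integral_sub {n : ℕ} {t : ℝ} (ht : 0 < t) (x : En n) :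
    ∫ y, heat t (y - x) = 1 := by
  rw [integral_sub_right_eq_self (fun y => heat t y) x]; exact (heat_integral ht).2

/-- Chapman–Kolmogorov identity, by completing the square. -/
lemma heat_conv {n : ℕ} {s t : ℝ} (hs : 0 < s) (ht : 0 < t) (x z : En n) :
    ∫ y, heat s (y - x) * heat t (z - y) = heat (s + t) (z - x) := by
  have hb : 0 < (s + t) / (4 * s * t) := by positivity
  rw [← integral_add_right_eq_self _ x]
  have h2 := (gauss_integral (n := n) hb ((1 / (2 * t)) • (z - x))).2
  have he : ∀ y : En n, heat s (y + x - x) * heat t (z - (y + x)) =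
      ((4 * Real.pi * s) ^ (-(n : ℝ) / 2) * (4 * Real.pi * t) ^ (-(n : ℝ) / 2) *
        Real.exp (-‖z - x‖ ^ 2 / (4 * t))) *
      Real.exp (-((s + t) / (4 * s * t)) * ‖y‖ ^ 2 + ⟪(1 / (2 * t)) • (z - x), y⟫) := by
    intro y
    unfold heat
    rw [show z - (y + x) = (z - x) - y by abel, add_sub_cancel_right]
    rw [show ∀ a b c d e f : ℝ, a * b * (c * d) = a * c * e * f ↔ (a * c) * (b * d) = (a * c) * (e * f)
      from fun a b c d e f => by
        rw [show a * b * (c * d) = (a * c) * (b * d) by ring,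
          show a * c * e * f = (a * c) * (e * f) by ring]]
    rw [← Real.exp_add, ← Real.exp_add]
    congr 2
    rw [norm_sub_sq_real (z - x) y, real_inner_smul_left]
    field_simp
    ring
  simp_rw [he]
  rw [integral_const_mul, h2]
  rw [show ∀ a b c d e : ℝ, a * b * c * (d * e) = (a * (b * d)) * (c * e) from
    fun a b c d e => by ring, heat_prefactor ht hb, ← Real.mul_rpow (by positivity) (by positivity),
    ← Real.exp_add, norm_smul, mul_pow, Real.norm_eq_abs, sq_abs]
  unfold heat
  congr 2
  · field_simp
  · field_simp
    ring

lemma Hop_integrable {n : ℕ} {t : ℝ} (ht : 0 < t) {g : En n → ℝ} (hg : Measurable g) {B : ℝ}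
    (hB : ∀ q, |g q| ≤ B) (x : En n) : Integrable (fun y => heat t (y - x) * g y) :=
  (heat_integrable_sub ht x).mul_bdd hg.aestronglyMeasurable
    (Filter.Eventually.of_forall hB)

lemma Hop_meas {n : ℕ} (t : ℝ) {g : En n → ℝ} (hg : Measurable g) : Measurable (Hop t g) := by
  have : StronglyMeasurable (Function.uncurry fun x y : En n => heat t (y - x) * g y) := by
    refine Measurable.stronglyMeasurable ?_
    exact ((heat_cont t).measurable.comp (measurable_snd.sub measurable_fst)).mul
      (hg.comp measurable_snd)
  exact this.integral_prod_right.measurable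

lemma Hop_abs_le {n : ℕ} {t : ℝ} (ht : 0 < t) {g : En n → ℝ} (hg : Measurable g) {B : ℝ}
    (hB : ∀ q, |g q| ≤ B) (x : En n) : |Hop t g x| ≤ B := by
  unfold Hop
  calc |∫ y, heat t (y - x) * g y| ≤ ∫ y, |heat t (y - x) * g y| := abs_integral_le_integral_abs
    _ ≤ ∫ y, heat t (y - x) * B := by
      refine integral_mono (Hop_integrable ht hg hB x).abs ((heat_integrable_sub ht x).mul_const B) ?_
      intro y
      show |heat t (y - x) * g y| ≤ _
      rw [abs_mul, abs_of_pos (heat_pos ht _)]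
      exact mul_le_mul_of_nonneg_left (hB y) (heat_pos ht _).le
    _ = B := by rw [integral_mul_const, heat_integral_sub ht, one_mul]

lemma Hop_semigroup {n : ℕ} {s t : ℝ} (hs : 0 < s) (ht : 0 < t) {g : En n → ℝ}
    (hg : Measurable g) {B : ℝ} (hB : ∀ q, |g q| ≤ B) (x : En n) :
    Hop (s + t) g x = Hop s (Hop t g) x := by
  unfold Hop
  have hm : Measurable (Function.uncurry fun y z : En n => heat s (y - x) * heat t (z - y)) :=
    ((heat_cont s).measurable.comp (measurable_fst.sub_const x)).mul
      ((heat_cont t).measurable.comp (measurable_snd.sub measurable_fst))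
  have hI0 : Integrable (Function.uncurry fun y z : En n => heat s (y - x) * heat t (z - y))
      (volume.prod volume) := by
    rw [integrable_prod_iff hm.aestronglyMeasurable]
    constructor
    · exact Filter.Eventually.of_forall fun y =>
        (heat_integrable_sub ht y).const_mul (heat s (y - x))
    · refine (heat_integrable_sub hs x).congr (Filter.Eventually.of_forall fun y => ?_)
      simp only [Function.uncurry_apply_pair]
      rw [integral_congr_ae (g := fun z => heat s (y - x) * heat t (z - y))
        (Filter.Eventually.of_forall fun z =>
          Real.norm_of_nonneg (mul_pos (heat_pos hs _) (heat_pos ht _)).le),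
        integral_const_mul, heat_integral_sub ht, mul_one]
  have hI : Integrable (Function.uncurry fun y z : En n => heat s (y - x) * heat t (z - y) * g z)
      (volume.prod volume) :=
    hI0.mul_bdd (hg.comp measurable_snd).aestronglyMeasurable
      (Filter.Eventually.of_forall fun p => hB p.2)
  calc ∫ z, heat (s + t) (z - x) * g z = ∫ z, ∫ y, heat s (y - x) * heat t (z - y) * g z := by
        congr 1; funext z; rw [integral_mul_const, heat_conv hs ht]
    _ = ∫ y, ∫ z, heat s (y - x) * heat t (z - y) * g z := (integral_integral_swap hI).symm
    _ = _ := by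
        congr 1; funext y; rw [← integral_const_mul]; congr 1; funext z; ring

/-- At times in `[1,2]` the heat kernel has a uniform positive lower bound on every translate
of the period cell. -/
lemma Hop_lower {n : ℕ} {L : ℝ} (hL : 0 < L) : ∃ c : ℝ, 0 < c ∧ ∀ t : ℝ, 1 ≤ t → t ≤ 2 →
    ∀ g : En n → ℝ, Measurable g → Per L g → (∀ q, 0 ≤ g q) → (∀ q, g q ≤ 1) → ∀ x,
      c * ∫ q in Box n L, g q ≤ Hop t g x := by
  obtain ⟨D, hD⟩ := (box_bdd (n := n) hL).exists_norm_le
  refine ⟨(8 * Real.pi) ^ (-(n : ℝ) / 2) * Real.exp (-D ^ 2 / 4), by positivity, ?_⟩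
  intro t h1 h2 g hg hper h0 hle x
  have ht : 0 < t := by linarith
  have hB : ∀ q, |g q| ≤ 1 := fun q => abs_le.2 ⟨by linarith [h0 q], hle q⟩
  have hI : Integrable (fun y => heat t y * g (x + y)) := by
    have := (Hop_integrable ht hg hB x).comp_add_left x
    simpa using this
  have e1 : Hop t g x = ∫ y, heat t y * g (x + y) := by
    unfold Hop
    rw [← integral_add_left_eq_self _ x]
    simp
  have hgI : IntegrableOn (fun y => g (x + y)) (Box n L) :=
    Measure.integrableOn_of_bounded (M := 1) (box_fin hL).ne
      (hg.comp (measurable_const_add x)).aestronglyMeasurable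
      (Filter.Eventually.of_forall fun y => hB (x + y))
  rw [e1, ← hper.integral_translate hL x, ← integral_const_mul]
  calc _ ≤ ∫ y in Box n L, heat t y * g (x + y) := by
        refine setIntegral_mono_on (hgI.const_mul _) hI.integrableOn (box_meas hL) fun y hy => ?_
        refine mul_le_mul_of_nonneg_right ?_ (h0 _)
        unfold heat
        have hD0 : 0 ≤ D := (norm_nonneg y).trans (hD y hy)
        have hy2 : ‖y‖ ^ 2 ≤ D ^ 2 := pow_le_pow_left₀ (norm_nonneg y) (hD y hy) 2
        refine mul_le_mul ?_ ?_ (by positivity) (by positivity)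
        · refine Real.rpow_le_rpow_of_nonpos (by positivity) ?_ ?_
          · nlinarith [Real.pi_pos]
          · have : (0:ℝ) ≤ n := Nat.cast_nonneg n
            linarith
        · refine Real.exp_le_exp.2 ?_
          rw [neg_div, neg_div, neg_le_neg_iff]
          refine (div_le_div_of_nonneg_left (by positivity) (by norm_num) (by linarith)).trans
            (div_le_div_of_nonneg_right hy2 (by norm_num))
    _ ≤ _ := setIntegral_le_integral hI
        (Filter.Eventually.of_forall fun y => mul_nonneg (heat_pos ht _).le (h0 _))

/-! ### The MALA operator -/

/-- Density of the accepted moves of the MALA chain. -/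
def accK {n : ℕ} (V : En n → ℝ) (dt : ℝ) (q q' : En n) : ℝ := Rk V dt q q' * Tker V dt q q'

/-- Bounded measurable functions. -/
def BM {n : ℕ} (f : En n → ℝ) : Prop := Measurable f ∧ ∃ B : ℝ, ∀ q, |f q| ≤ B

section
variable {n : ℕ} {V : En n → ℝ} {dt L : ℝ}

lemma Tker_eq (V : En n → ℝ) (dt : ℝ) (q q' : En n) :
    Tker V dt q q' = heat dt (q' - q + dt • gradient V q) := rfl

lemma Tker_pos (hdt : 0 < dt) (q q' : En n) : 0 < Tker V dt q q' := heat_pos hdt _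

lemma Tker_integrable (hdt : 0 < dt) (q : En n) : Integrable (Tker V dt q) := by
  have := heat_integrable_sub hdt (q - dt • gradient V q)
  refine this.congr (Filter.Eventually.of_forall fun y => ?_)
  simp only [Tker_eq]; congr 1; abel

lemma Tker_integral (hdt : 0 < dt) (q : En n) : ∫ q', Tker V dt q q' = 1 := by
  rw [← heat_integral_sub hdt (q - dt • gradient V q)]
  congr 1; funext y
  simp only [Tker_eq]; congr 1; abel

/-- Detailed balance: `e^{-V(q)} accK(q,q')` is manifestly symmetric. -/
lemma accK_balance (hdt : 0 < dt) (q q' : En n) :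
    Real.exp (-V q) * accK V dt q q' =
      min (Real.exp (-V q) * Tker V dt q q') (Real.exp (-V q') * Tker V dt q' q) := by
  have h := Tker_pos (V := V) hdt q q'
  have he := Real.exp_pos (-V q)
  unfold accK Rk
  rw [mul_left_comm, min_mul_of_nonneg _ _ (by positivity), one_mul, div_mul_cancel₀ _ (by positivity)]

lemma accK_symm (hdt : 0 < dt) (q q' : En n) :
    Real.exp (-V q) * accK V dt q q' = Real.exp (-V q') * accK V dt q' q := by
  rw [accK_balance hdt, accK_balance hdt, min_comm]

lemma accK_nonneg (hdt : 0 < dt) (q q' : En n) : 0 ≤ accK V dt q q' := by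
  have h := Tker_pos (V := V) hdt q q'
  have h' := Tker_pos (V := V) hdt q' q
  unfold accK Rk
  exact mul_nonneg (le_min zero_le_one (by positivity)) h.le

lemma accK_le (hdt : 0 < dt) (q q' : En n) : accK V dt q q' ≤ Tker V dt q q' := by
  unfold accK Rk
  exact mul_le_of_le_one_left (Tker_pos hdt _ _).le (min_le_left _ _)

lemma Tker_cont (hgc : Continuous (gradient V)) {X : Type*} [TopologicalSpace X]
    {a b : X → En n} (ha : Continuous a) (hb : Continuous b) :
    Continuous fun p : X => Tker V dt (a p) (b p) := by
  unfold Tker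
  fun_prop

lemma Rk_meas (hVc : Continuous V) (hgc : Continuous (gradient V)) :
    Measurable fun p : En n × En n => Rk V dt p.1 p.2 := by
  have h1 : Measurable fun p : En n × En n => Tker V dt p.1 p.2 :=
    (Tker_cont hgc continuous_fst continuous_snd).measurable
  have h2 : Measurable fun p : En n × En n => Tker V dt p.2 p.1 :=
    (Tker_cont hgc continuous_snd continuous_fst).measurable
  have h3 : Measurable fun p : En n × En n => Real.exp (-V p.1) := by
    have : Continuous fun p : En n × En n => Real.exp (-V p.1) := by fun_prop
    exact this.measurable
  have h4 : Measurable fun p : En n × En n => Real.exp (-V p.2) := by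
    have : Continuous fun p : En n × En n => Real.exp (-V p.2) := by fun_prop
    exact this.measurable
  exact Measurable.min measurable_const ((h4.mul h2).div (h3.mul h1))

lemma accK_meas (hVc : Continuous V) (hgc : Continuous (gradient V)) :
    Measurable (Function.uncurry (accK V dt)) := by
  have h1 : Measurable fun p : En n × En n => Tker V dt p.1 p.2 :=
    (Tker_cont hgc continuous_fst continuous_snd).measurable
  exact (Rk_meas hVc hgc).mul h1

lemma accK_integrable (hVc : Continuous V) (hgc : Continuous (gradient V)) (hdt : 0 < dt) (q : En n) :
    Integrable (accK V dt q) := by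
  refine (Tker_integrable (V := V) hdt q).mono'
    ((accK_meas hVc hgc).comp measurable_prodMk_left).aestronglyMeasurable
    (Filter.Eventually.of_forall fun y => ?_)
  rw [Real.norm_of_nonneg (accK_nonneg hdt _ _)]
  exact accK_le hdt _ _

/-- Total acceptance probability from `q`. -/
def acc (V : En n → ℝ) (dt : ℝ) (q : En n) : ℝ := ∫ q', accK V dt q q'

lemma acc_nonneg (hdt : 0 < dt) (q : En n) : 0 ≤ acc V dt q :=
  integral_nonneg fun _ => accK_nonneg hdt _ _

lemma acc_le_one (hVc : Continuous V) (hgc : Continuous (gradient V)) (hdt : 0 < dt) (q : En n) :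
    acc V dt q ≤ 1 := by
  rw [← Tker_integral (V := V) hdt q]
  exact integral_mono (accK_integrable hVc hgc hdt q) (Tker_integrable hdt q) fun y => accK_le hdt _ _

lemma accK_mul_integrable (hVc : Continuous V) (hgc : Continuous (gradient V)) (hdt : 0 < dt)
    {f : En n → ℝ} (hf : BM f) (q : En n) : Integrable (fun q' => accK V dt q q' * f q') := by
  obtain ⟨hm, B, hB⟩ := hf
  exact (accK_integrable hVc hgc hdt q).mul_bdd hm.aestronglyMeasurable
    (Filter.Eventually.of_forall hB)

lemma Pmala_eq (hVc : Continuous V) (hgc : Continuous (gradient V)) (hdt : 0 < dt)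
    {f : En n → ℝ} (hf : BM f) (q : En n) :
    Pmala V dt f q = (1 - acc V dt q) * f q + ∫ q', accK V dt q q' * f q' := by
  have : ∫ q', accK V dt q q' * (f q' - f q) = (∫ q', accK V dt q q' * f q') - acc V dt q * f q := by
    unfold acc
    rw [← integral_mul_const, ← integral_sub (accK_mul_integrable hVc hgc hdt hf q)
      ((accK_integrable hVc hgc hdt q).mul_const _)]
    congr 1; funext y; ring
  unfold Pmala
  change f q + ∫ q', accK V dt q q' * (f q' - f q) = _
  rw [this]; ring

lemma BM.const (c : ℝ) : BM (fun _ : En n => c) := ⟨measurable_const, |c|, fun _ => le_rfl⟩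

lemma BM.sub {f g : En n → ℝ} (hf : BM f) (hg : BM g) : BM (fun q => f q - g q) := by
  obtain ⟨hm, B, hB⟩ := hf
  obtain ⟨hm', B', hB'⟩ := hg
  exact ⟨hm.sub hm', B + B', fun q => (abs_sub _ _).trans (add_le_add (hB q) (hB' q))⟩

lemma BM.add {f g : En n → ℝ} (hf : BM f) (hg : BM g) : BM (fun q => f q + g q) := by
  obtain ⟨hm, B, hB⟩ := hf
  obtain ⟨hm', B', hB'⟩ := hg
  exact ⟨hm.add hm', B + B', fun q => (abs_add_le _ _).trans (add_le_add (hB q) (hB' q))⟩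

lemma BM.mul {f g : En n → ℝ} (hf : BM f) (hg : BM g) : BM (fun q => f q * g q) := by
  obtain ⟨hm, B, hB⟩ := hf
  obtain ⟨hm', B', hB'⟩ := hg
  refine ⟨hm.mul hm', B * B', fun q => ?_⟩
  rw [abs_mul]
  exact mul_le_mul (hB q) (hB' q) (abs_nonneg _) ((abs_nonneg _).trans (hB q))

lemma BM.of_bounds {f : En n → ℝ} (hm : Measurable f) {a b : ℝ} (ha : ∀ q, a ≤ f q)
    (hb : ∀ q, f q ≤ b) : BM f :=
  ⟨hm, max |a| |b|, fun q => abs_le_max_abs_abs (ha q) (hb q)⟩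

lemma Pmala_add (hVc : Continuous V) (hgc : Continuous (gradient V)) (hdt : 0 < dt)
    {f g : En n → ℝ} (hf : BM f) (hg : BM g) (q : En n) :
    Pmala V dt (fun x => f x + g x) q = Pmala V dt f q + Pmala V dt g q := by
  rw [Pmala_eq hVc hgc hdt hf, Pmala_eq hVc hgc hdt hg, Pmala_eq hVc hgc hdt (hf.add hg)]
  have : ∫ q', accK V dt q q' * (f q' + g q') =
      (∫ q', accK V dt q q' * f q') + ∫ q', accK V dt q q' * g q' := by
    rw [← integral_add (accK_mul_integrable hVc hgc hdt hf q) (accK_mul_integrable hVc hgc hdt hg q)]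
    congr 1; funext y; ring
  rw [this]; ring

lemma Pmala_smul (hVc : Continuous V) (hgc : Continuous (gradient V)) (hdt : 0 < dt)
    {f : En n → ℝ} (hf : BM f) (c : ℝ) (q : En n) :
    Pmala V dt (fun x => c * f x) q = c * Pmala V dt f q := by
  rw [Pmala_eq hVc hgc hdt hf, Pmala_eq hVc hgc hdt ((BM.const c).mul hf)]
  have : ∫ q', accK V dt q q' * (c * f q') = c * (∫ q', accK V dt q q' * f q') := by
    rw [← integral_const_mul]
    congr 1; funext y; ring
  rw [this]; ring

lemma Pmala_const (c : ℝ) (q : En n) : Pmala V dt (fun _ => c) q = c := by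
  simp [Pmala]

lemma Pmala_mono (hVc : Continuous V) (hgc : Continuous (gradient V)) (hdt : 0 < dt)
    {f g : En n → ℝ} (hf : BM f) (hg : BM g) (h : ∀ q, f q ≤ g q) (q : En n) :
    Pmala V dt f q ≤ Pmala V dt g q := by
  rw [Pmala_eq hVc hgc hdt hf, Pmala_eq hVc hgc hdt hg]
  refine add_le_add (mul_le_mul_of_nonneg_left (h q) (sub_nonneg.2 (acc_le_one hVc hgc hdt q)))
    (integral_mono (accK_mul_integrable hVc hgc hdt hf q) (accK_mul_integrable hVc hgc hdt hg q)
      fun y => mul_le_mul_of_nonneg_left (h y) (accK_nonneg hdt _ _))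

lemma Pmala_meas (hVc : Continuous V) (hgc : Continuous (gradient V))
    {f : En n → ℝ} (hf : Measurable f) : Measurable (Pmala V dt f) := by
  refine hf.add ?_
  have : StronglyMeasurable (Function.uncurry fun q q' : En n => accK V dt q q' * (f q' - f q)) :=
    ((accK_meas hVc hgc).mul ((hf.comp measurable_snd).sub
      (hf.comp measurable_fst))).stronglyMeasurable
  exact this.integral_prod_right.measurable

lemma Pmala_bounds (hVc : Continuous V) (hgc : Continuous (gradient V)) (hdt : 0 < dt)
    {f : En n → ℝ} (hf : Measurable f) {a b : ℝ} (ha : ∀ q, a ≤ f q) (hb : ∀ q, f q ≤ b)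
    (q : En n) : a ≤ Pmala V dt f q ∧ Pmala V dt f q ≤ b := by
  have hBM := BM.of_bounds hf ha hb
  constructor
  · rw [← Pmala_const (V := V) (dt := dt) a q]
    exact Pmala_mono hVc hgc hdt (BM.const a) hBM ha q
  · rw [← Pmala_const (V := V) (dt := dt) b q]
    exact Pmala_mono hVc hgc hdt hBM (BM.const b) hb q

lemma Pmala_BM (hVc : Continuous V) (hgc : Continuous (gradient V)) (hdt : 0 < dt)
    {f : En n → ℝ} (hf : BM f) : BM (Pmala V dt f) := by
  obtain ⟨hm, B, hB⟩ := hf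
  exact ⟨Pmala_meas hVc hgc hm, B, fun q => abs_le.2
    (Pmala_bounds hVc hgc hdt hm (fun q => (abs_le.1 (hB q)).1) (fun q => (abs_le.1 (hB q)).2) q)⟩

lemma accK_per (hper : Per L V) (q q' : En n) (i : Fin n) :
    accK V dt (q + L • EuclideanSpace.single i (1 : ℝ)) (q' + L • EuclideanSpace.single i (1 : ℝ))
      = accK V dt q q' := by
  unfold accK Rk
  simp only [Tker_eq, hper _ i, hper.gradient _ i, add_sub_add_right_eq_sub]

lemma Pmala_per (hper : Per L V) {f : En n → ℝ} (hf : Per L f) : Per L (Pmala V dt f) := by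
  intro q i
  unfold Pmala
  change _ + ∫ q', accK V dt _ q' * (f q' - _) = _ + ∫ q', accK V dt q q' * (f q' - f q)
  rw [← integral_add_right_eq_self _ (L • EuclideanSpace.single i (1 : ℝ)), hf q i]
  simp only [accK_per hper, hf _ i]

set_option maxHeartbeats 1000000 in
/-- The Gibbs measure is invariant, unnormalised form: writing `q' = q + d`, detailed balance and
translation invariance of the cell integral exchange the jumps `d` and `-d`. -/
lemma Pmala_invariant (hL : 0 < L) (hVc : Continuous V) (hgc : Continuous (gradient V))
    (hper : Per L V) (hdt : 0 < dt) {f : En n → ℝ} (hf : BM f) (hfp : Per L f) :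
    ∫ q in Box n L, Pmala V dt f q * Real.exp (-V q) = ∫ q in Box n L, f q * Real.exp (-V q) := by
  obtain ⟨CV, -, hCV⟩ := hper.bounded hL hVc
  have hE : BM (fun q : En n => Real.exp (-V q)) :=
    ⟨Real.measurable_exp.comp hVc.measurable.neg, Real.exp CV, fun q => by
      rw [abs_of_pos (Real.exp_pos _)]
      exact Real.exp_le_exp.2 ((neg_le_abs _).trans (hCV q))⟩
  have hBI : ∀ {h : En n → ℝ}, BM h → IntegrableOn h (Box n L) := fun {h} ⟨hm, B, hB⟩ =>
    Measure.integrableOn_of_bounded (M := B) (box_fin hL).ne hm.aestronglyMeasurable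
      (Filter.Eventually.of_forall hB)
  -- `s q d` is the stationary flux from `q` to `q + d`
  set s : En n → En n → ℝ := fun q d => Real.exp (-V q) * accK V dt q (q + d) with hs
  have hsm : Measurable (Function.uncurry s) := by
    have h1 : Measurable fun p : En n × En n => (p.1, p.1 + p.2) :=
      measurable_fst.prodMk (measurable_fst.add measurable_snd)
    exact (hE.1.comp measurable_fst).mul ((accK_meas hVc hgc).comp h1)
  have hs0 : ∀ q d, 0 ≤ s q d := fun q d => mul_nonneg (Real.exp_pos _).le (accK_nonneg hdt _ _)
  have hsI : ∀ q, Integrable (s q) := fun q =>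
    ((accK_integrable hVc hgc hdt q).comp_add_left q).const_mul _
  have hsacc : ∀ q, ∫ d, s q d = Real.exp (-V q) * acc V dt q := by
    intro q
    simp only [hs]
    rw [integral_const_mul, integral_add_left_eq_self (fun y => accK V dt q y) q, acc]
  have hprod : Integrable (Function.uncurry s) ((volume.restrict (Box n L)).prod volume) := by
    rw [integrable_prod_iff hsm.aestronglyMeasurable]
    refine ⟨Filter.Eventually.of_forall fun q => hsI q, ?_⟩
    have hb : BM fun q : En n => ∫ d, ‖s q d‖ := by
      obtain ⟨hm, B, hB⟩ := hE
      refine ⟨(hsm.stronglyMeasurable.norm.integral_prod_right (f := fun q d => ‖s q d‖)).measurable,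
        B, fun q => ?_⟩
      have : ∫ d, ‖s q d‖ = ∫ d, s q d := by
        congr 1; funext d; exact Real.norm_of_nonneg (hs0 q d)
      change |∫ d, ‖s q d‖| ≤ B
      rw [this, hsacc, abs_mul, abs_of_nonneg (acc_nonneg hdt q)]
      exact (mul_le_of_le_one_right (abs_nonneg _) (acc_le_one hVc hgc hdt q)).trans (hB q)
    exact hBI hb
  obtain ⟨hfm, B, hB⟩ := id hf
  have hp1 : Integrable (Function.uncurry fun q d => s q d * f q)
      ((volume.restrict (Box n L)).prod volume) :=
    hprod.mul_bdd (hfm.comp measurable_fst).aestronglyMeasurable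
      (Filter.Eventually.of_forall fun p => hB p.1)
  have hp2 : Integrable (Function.uncurry fun q d => s q d * f (q + d))
      ((volume.restrict (Box n L)).prod volume) :=
    hprod.mul_bdd (hfm.comp (measurable_fst.add measurable_snd)).aestronglyMeasurable
      (Filter.Eventually.of_forall fun p => hB (p.1 + p.2))
  have key : ∫ q in Box n L, ∫ d, s q d * f (q + d) = ∫ q in Box n L, ∫ d, s q d * f q := by
    rw [integral_integral_swap hp2, integral_integral_swap hp1,
      ← integral_neg_eq_self (fun d => ∫ q in Box n L, s q d * f q)]
    congr 1; funext d
    have hP : Per L fun q => s q (-d) * f q := by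
      intro q i
      simp only [hs]
      rw [hper q i, hfp q i, add_right_comm, accK_per hper]
    rw [← hP.integral_translate hL d]
    congr 1; funext q
    simp only [hs]
    rw [accK_symm hdt, add_comm d q, add_neg_cancel_right]
  have hJ : ∀ q, Pmala V dt f q * Real.exp (-V q) =
      f q * Real.exp (-V q) + ((∫ d, s q d * f (q + d)) - ∫ d, s q d * f q) := by
    intro q
    have e1 : ∫ d, s q d * f (q + d) = Real.exp (-V q) * ∫ y, accK V dt q y * f y := by
      rw [← integral_add_left_eq_self (fun y => accK V dt q y * f y) q, ← integral_const_mul]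
      congr 1; funext d; simp only [hs]; ring
    rw [e1, integral_mul_const, hsacc, Pmala_eq hVc hgc hdt hf]
    ring
  have i1 : Integrable (fun q => ∫ d, s q d * f (q + d)) (volume.restrict (Box n L)) :=
    hp2.integral_prod_left
  have i2 : Integrable (fun q => ∫ d, s q d * f q) (volume.restrict (Box n L)) :=
    hp1.integral_prod_left
  simp_rw [hJ]
  have i12 : Integrable (fun q => (∫ d, s q d * f (q + d)) - ∫ d, s q d * f q)
      (volume.restrict (Box n L)) := i1.sub i2
  rw [integral_add (hBI (hf.mul hE)) i12, integral_sub i1 i2, key, sub_self, add_zero]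

/-! ### Comparison with the heat semigroup -/

/-- The accepted density dominates the Girsanov-like tilt `exp (-⟨∇V, d⟩ / 2)` of the heat kernel, up
to an error of order `|d|² + dt` in the exponent: both terms of the minimum in `accK_balance` have
this form, because the drifts at the two ends and the increment of `V` agree to second order. -/
lemma accK_lower {G M : ℝ} (hM0 : 0 ≤ M) (hG : ∀ q, ‖gradient V q‖ ≤ G)
    (hlip : ∀ q q', ‖gradient V q' - gradient V q‖ ≤ M * ‖q' - q‖)
    (htay : ∀ q q', |V q' - V q - ⟪gradient V q, q' - q⟫| ≤ M * ‖q' - q‖ ^ 2)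
    (hdt : 0 < dt) (q q' : En n) :
    heat dt (q' - q) * Real.exp (-⟪gradient V q, q' - q⟫ / 2 - (2 * M + G ^ 2) * (‖q' - q‖ ^ 2 + dt))
      ≤ accK V dt q q' := by
  have hbal := accK_balance (V := V) hdt q q'
  have hl := hlip q q'
  have ht := abs_le.1 (htay q q')
  have hb := pow_le_pow_left₀ (norm_nonneg _) (hG q) 2
  have hb' := pow_le_pow_left₀ (norm_nonneg _) (hG q') 2
  have e1 : Tker V dt q q' = heat dt (q' - q) *
      Real.exp (-⟪gradient V q, q' - q⟫ / 2 - dt * ‖gradient V q‖ ^ 2 / 4) := by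
    rw [Tker_eq]; unfold heat
    rw [mul_assoc (_ ^ _), ← Real.exp_add]
    congr 2
    rw [norm_add_sq_real, real_inner_smul_right, norm_smul, mul_pow, Real.norm_eq_abs, sq_abs,
      real_inner_comm]
    field_simp
    ring
  have e2 : Tker V dt q' q = heat dt (q' - q) *
      Real.exp (⟪gradient V q', q' - q⟫ / 2 - dt * ‖gradient V q'‖ ^ 2 / 4) := by
    rw [Tker_eq]; unfold heat
    rw [mul_assoc (_ ^ _), ← Real.exp_add]
    congr 2
    rw [← neg_sub q' q, neg_add_eq_sub, norm_sub_sq_real, real_inner_smul_left, norm_smul, mul_pow,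
      Real.norm_eq_abs, sq_abs]
    field_simp
    ring
  have hin : -(M * ‖q' - q‖ ^ 2) ≤ ⟪gradient V q', q' - q⟫ - ⟪gradient V q, q' - q⟫ := by
    rw [← inner_sub_left]
    have := abs_le.1 (abs_real_inner_le_norm (gradient V q' - gradient V q) (q' - q))
    nlinarith [norm_nonneg (q' - q)]
  have hmain : Real.exp (-V q) * (heat dt (q' - q) *
      Real.exp (-⟪gradient V q, q' - q⟫ / 2 - (2 * M + G ^ 2) * (‖q' - q‖ ^ 2 + dt)))
      ≤ Real.exp (-V q) * accK V dt q q' := by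
    have hMd : 0 ≤ M * dt := by positivity
    have hGd : 0 ≤ G ^ 2 * ‖q' - q‖ ^ 2 := by positivity
    have hMq : 0 ≤ M * ‖q' - q‖ ^ 2 := by positivity
    have hGt : 0 ≤ G ^ 2 * dt := by positivity
    have h1 : dt * ‖gradient V q‖ ^ 2 ≤ G ^ 2 * dt := by nlinarith
    have h2 : dt * ‖gradient V q'‖ ^ 2 ≤ G ^ 2 * dt := by nlinarith
    rw [hbal, e1, e2]
    refine le_min ?_ ?_
    · refine mul_le_mul_of_nonneg_left (mul_le_mul_of_nonneg_left (Real.exp_le_exp.2 ?_)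
        (heat_pos hdt _).le) (Real.exp_pos _).le
      nlinarith
    · rw [mul_left_comm, mul_left_comm (Real.exp (-V q')), ← Real.exp_add, ← Real.exp_add]
      refine mul_le_mul_of_nonneg_left (Real.exp_le_exp.2 ?_) (heat_pos hdt _).le
      nlinarith
  exact le_of_mul_le_mul_left hmain (Real.exp_pos _)

/-- One-step comparison with the heat semigroup, by Cauchy–Schwarz: the chi-square type integral
`∫ heat² / accK` is at most `e^{C dt}`. -/
lemma step_compare {G M : ℝ} (hM0 : 0 ≤ M) (hG : ∀ q, ‖gradient V q‖ ≤ G)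
    (hlip : ∀ q q', ‖gradient V q' - gradient V q‖ ≤ M * ‖q' - q‖)
    (htay : ∀ q q', |V q' - V q - ⟪gradient V q, q' - q⟫| ≤ M * ‖q' - q‖ ^ 2)
    (hVc : Continuous V) (hgc : Continuous (gradient V))
    (hdt : 0 < dt) {c C : ℝ} (hc : c = 2 * M + G ^ 2) (hC : C = c + 4 * c * n + G ^ 2 / 2)
    (hsmall : 8 * c * dt ≤ 1)
    {g : En n → ℝ} (hg : BM g) (x : En n) :
    (Hop dt g x) ^ 2 ≤ Real.exp (C * dt) * Pmala V dt (fun q => g q * g q) x := by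
  have hc0 : 0 ≤ c := by rw [hc]; positivity
  set v := gradient V x with hv
  have hb0 : 0 < 1 / (4 * dt) - c := by
    rw [sub_pos, lt_div_iff₀ (by positivity)]; nlinarith
  set b0 := 1 / (4 * dt) - c with hb0d
  obtain ⟨hAI, hAv⟩ := gauss_integral (n := n) hb0 ((1 / 2 : ℝ) • v)
  -- `A y` is `heat² / w` with `w` the explicit lower bound of `accK_lower`
  set A : En n → ℝ := fun y => heat dt (y - x) *
    Real.exp (⟪v, y - x⟫ / 2 + c * (‖y - x‖ ^ 2 + dt)) with hA
  have hAeq : A = fun y => (Real.exp (c * dt) * (4 * Real.pi * dt) ^ (-(n : ℝ) / 2)) *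
      Real.exp (-b0 * ‖y - x‖ ^ 2 + ⟪(1 / 2 : ℝ) • v, y - x⟫) := by
    funext y
    simp only [hA, heat]
    rw [mul_comm (Real.exp (c * dt)), mul_assoc (_ ^ _), mul_assoc (_ ^ _), ← Real.exp_add,
      ← Real.exp_add]
    congr 2
    rw [real_inner_smul_left, hb0d]
    field_simp
    ring
  have hAint : Integrable A := by
    rw [hAeq]
    exact (hAI.comp_sub_right x).const_mul _
  have hAle : ∫ y, A y ≤ Real.exp (C * dt) := by
    rw [hAeq, integral_const_mul,
      integral_sub_right_eq_self (fun y => Real.exp (-b0 * ‖y‖ ^ 2 + ⟪(1 / 2 : ℝ) • v, y⟫)) x, hAv,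
      show ∀ a b c d : ℝ, a * b * (c * d) = a * (b * c) * d from fun a b c d => by ring,
      heat_prefactor hdt hb0]
    have h4 : 4 * dt * b0 = 1 - 4 * c * dt := by rw [hb0d]; field_simp
    have hx0 : 0 ≤ 4 * c * dt := by positivity
    have hlow : Real.exp (-(2 * (4 * c * dt))) ≤ 1 - 4 * c * dt := by
      rw [Real.exp_neg, inv_le_comm₀ (Real.exp_pos _) (by linarith)]
      refine le_trans ?_ (Real.add_one_le_exp _)
      rw [inv_le_iff_one_le_mul₀ (by linarith)]
      nlinarith
    have h5 : (4 * dt * b0) ^ (-(n : ℝ) / 2) ≤ Real.exp (4 * c * n * dt) := by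
      rw [h4]
      have : (0 : ℝ) ≤ n := Nat.cast_nonneg n
      refine (Real.rpow_le_rpow_of_nonpos (Real.exp_pos _) hlow (by linarith)).trans ?_
      rw [← Real.exp_mul]
      exact Real.exp_le_exp.2 (by ring_nf; exact le_rfl)
    have h6 : ‖(1 / 2 : ℝ) • v‖ ^ 2 / (4 * b0) ≤ G ^ 2 / 2 * dt := by
      rw [norm_smul, mul_pow, Real.norm_eq_abs, sq_abs, div_le_iff₀ (by positivity)]
      have := pow_le_pow_left₀ (norm_nonneg _) (hG x) 2
      have e : G ^ 2 / 2 * dt * (4 * b0) = G ^ 2 / 2 * (4 * dt * b0) := by ring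
      rw [e, h4]
      nlinarith [sq_nonneg G]
    calc _ ≤ Real.exp (c * dt) * Real.exp (4 * c * n * dt) * Real.exp (G ^ 2 / 2 * dt) := by
          gcongr
      _ = _ := by
          rw [← Real.exp_add, ← Real.exp_add, hC]; congr 1; ring
  obtain ⟨hgm, B, hB⟩ := id hg
  have hHI := Hop_integrable hdt hgm hB x
  have hKI := accK_mul_integrable hVc hgc hdt (hg.mul hg) x
  -- optimal parameter in the quadratic form proving Cauchy–Schwarz
  set s := Hop dt g x * Real.exp (-(C * dt)) with hs
  have hpt : ∀ y, 2 * s * (heat dt (y - x) * g y) ≤ s ^ 2 * A y + accK V dt x y * (g y * g y) := by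
    intro y
    have hlow := accK_lower hM0 hG hlip htay hdt x y
    rw [← hc] at hlow
    have hgg := mul_le_mul_of_nonneg_right hlow (mul_self_nonneg (g y))
    refine le_trans ?_ (add_le_add_right hgg _)
    have hh := heat_pos hdt (y - x)
    set u := ⟪v, y - x⟫ / 2 + c * (‖y - x‖ ^ 2 + dt) with hu
    have e : -⟪gradient V x, y - x⟫ / 2 - c * (‖y - x‖ ^ 2 + dt) = -u := by rw [hu]; ring
    rw [e]
    simp only [hA]
    have hprod : Real.exp u * Real.exp (-u) = 1 := by rw [← Real.exp_add]; simp
    have hsq : 0 ≤ heat dt (y - x) * Real.exp (-u) * (s * Real.exp u - g y) ^ 2 := by positivity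
    have hexp : heat dt (y - x) * Real.exp (-u) * (s * Real.exp u - g y) ^ 2 =
        heat dt (y - x) * (s ^ 2 * Real.exp u * (Real.exp u * Real.exp (-u))
          - 2 * s * g y * (Real.exp u * Real.exp (-u)) + Real.exp (-u) * (g y * g y)) := by ring
    rw [hexp, hprod] at hsq
    nlinarith
  have hint : 2 * s * Hop dt g x ≤ s ^ 2 * (∫ y, A y) + ∫ y, accK V dt x y * (g y * g y) := by
    unfold Hop at hs ⊢
    rw [← integral_const_mul, ← integral_const_mul, ← integral_add (hAint.const_mul _) hKI]
    exact integral_mono (hHI.const_mul _) ((hAint.const_mul _).add hKI) hpt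
  have hP : ∫ y, accK V dt x y * (g y * g y) ≤ Pmala V dt (fun q => g q * g q) x := by
    rw [Pmala_eq hVc hgc hdt (hg.mul hg)]
    have := mul_nonneg (sub_nonneg.2 (acc_le_one hVc hgc hdt x)) (mul_self_nonneg (g x))
    linarith
  have hX : Real.exp (C * dt) * Real.exp (-(C * dt)) = 1 := by rw [← Real.exp_add]; simp
  have hXp := Real.exp_pos (C * dt)
  have h1 : 2 * s * Hop dt g x ≤ s ^ 2 * Real.exp (C * dt) + Pmala V dt (fun q => g q * g q) x :=
    hint.trans (add_le_add (mul_le_mul_of_nonneg_left hAle (sq_nonneg s)) hP)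
  have h2 : s ^ 2 * Real.exp (C * dt) = s * Hop dt g x := by
    rw [hs]
    calc _ = Hop dt g x * Real.exp (-(C * dt)) * Hop dt g x *
          (Real.exp (C * dt) * Real.exp (-(C * dt))) := by ring
      _ = _ := by rw [hX]; ring
  have h3 : s * Hop dt g x ≤ Pmala V dt (fun q => g q * g q) x := by linarith
  calc (Hop dt g x) ^ 2 = Real.exp (C * dt) * (s * Hop dt g x) := by
        rw [hs]
        calc _ = (Real.exp (C * dt) * Real.exp (-(C * dt))) * (Hop dt g x) ^ 2 := by rw [hX, one_mul]
          _ = _ := by ring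
    _ ≤ _ := mul_le_mul_of_nonneg_left h3 hXp.le

end

/-! ### Contraction and the Poisson series -/

section
variable {n : ℕ} {V : En n → ℝ} {dt L : ℝ}

lemma iter_BM (hVc : Continuous V) (hgc : Continuous (gradient V)) (hdt : 0 < dt)
    {f : En n → ℝ} (hf : BM f) (k : ℕ) : BM ((Pmala V dt)^[k] f) := by
  induction k with
  | zero => exact hf
  | succ k ih => rw [Function.iterate_succ_apply']; exact Pmala_BM hVc hgc hdt ih

lemma iter_per (hper : Per L V) {f : En n → ℝ} (hf : Per L f) (k : ℕ) :
    Per L ((Pmala V dt)^[k] f) := by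
  induction k with
  | zero => exact hf
  | succ k ih => rw [Function.iterate_succ_apply']; exact Pmala_per hper ih

lemma iter_bounds (hVc : Continuous V) (hgc : Continuous (gradient V)) (hdt : 0 < dt)
    {f : En n → ℝ} (hf : BM f) {a b : ℝ} (ha : ∀ q, a ≤ f q) (hb : ∀ q, f q ≤ b) (k : ℕ)
    (q : En n) : a ≤ (Pmala V dt)^[k] f q ∧ (Pmala V dt)^[k] f q ≤ b := by
  induction k generalizing q with
  | zero => exact ⟨ha q, hb q⟩
  | succ k ih =>
    rw [Function.iterate_succ_apply']
    exact Pmala_bounds hVc hgc hdt (iter_BM hVc hgc hdt hf k).1 (fun q => (ih q).1)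
      (fun q => (ih q).2) q

lemma iter_mono (hVc : Continuous V) (hgc : Continuous (gradient V)) (hdt : 0 < dt)
    {f g : En n → ℝ} (hf : BM f) (hg : BM g) (h : ∀ q, f q ≤ g q) (k : ℕ) (q : En n) :
    (Pmala V dt)^[k] f q ≤ (Pmala V dt)^[k] g q := by
  induction k generalizing q with
  | zero => exact h q
  | succ k ih =>
    rw [Function.iterate_succ_apply', Function.iterate_succ_apply']
    exact Pmala_mono hVc hgc hdt (iter_BM hVc hgc hdt hf k) (iter_BM hVc hgc hdt hg k) ih q

lemma iter_affine (hVc : Continuous V) (hgc : Continuous (gradient V)) (hdt : 0 < dt)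
    {f : En n → ℝ} (hf : BM f) (α γ : ℝ) (k : ℕ) :
    (Pmala V dt)^[k] (fun q => α + γ * f q) = fun q => α + γ * (Pmala V dt)^[k] f q := by
  induction k with
  | zero => rfl
  | succ k ih =>
    rw [Function.iterate_succ_apply', ih]
    funext q
    have hk := iter_BM hVc hgc hdt hf k
    rw [Pmala_add hVc hgc hdt (BM.const α) ((BM.const γ).mul hk), Pmala_const,
      Pmala_smul hVc hgc hdt hk, Function.iterate_succ_apply']

lemma iter_invariant (hL : 0 < L) (hVc : Continuous V) (hgc : Continuous (gradient V))
    (hper : Per L V) (hdt : 0 < dt) {f : En n → ℝ} (hf : BM f) (hfp : Per L f) (k : ℕ) :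
    ∫ q in Box n L, (Pmala V dt)^[k] f q * Real.exp (-V q)
      = ∫ q in Box n L, f q * Real.exp (-V q) := by
  induction k with
  | zero => rfl
  | succ k ih =>
    rw [← ih, Function.iterate_succ_apply']
    exact Pmala_invariant hL hVc hgc hper hdt (iter_BM hVc hgc hdt hf k) (iter_per hper hfp k)

/-- Iterating `step_compare` along the heat semigroup: the cost `e^{C dt}` per step accumulates to
`e^{C T}` over the time `T = (k+1) dt`. -/
lemma iter_compare {C : ℝ} (hVc : Continuous V) (hgc : Continuous (gradient V)) (hdt : 0 < dt)
    (hstep : ∀ g : En n → ℝ, BM g → ∀ x,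
      (Hop dt g x) ^ 2 ≤ Real.exp (C * dt) * Pmala V dt (fun q => g q * g q) x)
    {g : En n → ℝ} (hg : BM g) (k : ℕ) (x : En n) :
    (Hop ((k + 1 : ℕ) * dt) g x) ^ 2 ≤
      Real.exp (C * ((k + 1 : ℕ) * dt)) * (Pmala V dt)^[k + 1] (fun q => g q * g q) x := by
  induction k generalizing x with
  | zero => simpa using hstep g hg x
  | succ k ih =>
    obtain ⟨hgm, B, hB⟩ := id hg
    have ht : 0 < ((k + 1 : ℕ) : ℝ) * dt := by positivity
    have hHB : BM (Hop ((k + 1 : ℕ) * dt) g) := ⟨Hop_meas _ hgm, B, Hop_abs_le ht hgm hB⟩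
    have hPB := iter_BM hVc hgc hdt (hg.mul hg) (k + 1)
    have e : ((k + 1 + 1 : ℕ) : ℝ) * dt = dt + (k + 1 : ℕ) * dt := by push_cast; ring
    rw [e, Hop_semigroup hdt ht hgm hB, Function.iterate_succ_apply']
    calc _ ≤ _ := hstep _ hHB x
      _ ≤ Real.exp (C * dt) * Pmala V dt (fun q => Real.exp (C * ((k + 1 : ℕ) * dt)) *
            (Pmala V dt)^[k + 1] (fun q => g q * g q) q) x := by
          refine mul_le_mul_of_nonneg_left (Pmala_mono hVc hgc hdt (hHB.mul hHB)
            ((BM.const _).mul hPB) (fun q => ?_) x) (Real.exp_pos _).le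
          rw [← sq]; exact ih q
      _ = _ := by
          rw [Pmala_smul hVc hgc hdt hPB, ← mul_assoc, ← Real.exp_add, ← mul_add]

/-- Uniform Doeblin-type contraction: over a number `N ≈ 1/dt` of steps the oscillation shrinks
by a factor that does not depend on `dt`. -/
lemma contraction (hL : 0 < L) (hV : ContDiff ℝ (⊤ : ℕ∞) V) (hper : Per L V) :
    ∃ ε > (0 : ℝ), ε < 1 ∧ ∃ dts > (0 : ℝ), ∀ dt : ℝ, 0 < dt → dt ≤ dts →
      ∃ N : ℕ, 0 < N ∧ N * dt ≤ 2 ∧ ∀ f : En n → ℝ, BM f → Per L f → ∀ a b : ℝ,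
        (∀ q, a ≤ f q) → (∀ q, f q ≤ b) → ∃ a' b' : ℝ, b' - a' ≤ (1 - ε) * (b - a) ∧
          ∀ q, a' ≤ (Pmala V dt)^[N] f q ∧ (Pmala V dt)^[N] f q ≤ b' := by
  obtain ⟨G, M, hG0, hM0, hG, hlip, htay⟩ := potential_bounds hL hV hper
  have hVc := hV.continuous
  have hgc := (gradient_contDiff hV).continuous
  obtain ⟨c, hc, hH⟩ := Hop_lower (n := n) hL
  set cc := 2 * M + G ^ 2 with hcc
  set C := cc + 4 * cc * n + G ^ 2 / 2 with hC
  have hcc0 : 0 ≤ cc := by positivity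
  have hC0 : 0 ≤ C := by positivity
  have hbox := box_pos (n := n) hL
  set ε := min (1 / 2) (Real.exp (-(C * 2)) * (c * (volume.real (Box n L) / 2)) ^ 2) with hε
  have hε0 : 0 < ε := lt_min (by norm_num) (by positivity)
  refine ⟨ε, hε0, (min_le_left _ _).trans_lt (by norm_num), min 1 (1 / (8 * (cc + 1))), by positivity,
    fun dt hdt hdts => ?_⟩
  have hdt1 : dt ≤ 1 := hdts.trans (min_le_left _ _)
  have hsmall : 8 * cc * dt ≤ 1 := by
    have := hdts.trans (min_le_right _ _)
    rw [le_div_iff₀ (by positivity)] at this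
    nlinarith
  obtain ⟨k, hk⟩ : ∃ k, ⌈1 / dt⌉₊ = k + 1 :=
    Nat.exists_eq_succ_of_ne_zero (Nat.ceil_pos.2 (by positivity)).ne'
  have hT1 : 1 ≤ ((k + 1 : ℕ) : ℝ) * dt := by
    rw [← hk, ← div_le_iff₀ hdt]; exact Nat.le_ceil _
  have hT2 : ((k + 1 : ℕ) : ℝ) * dt ≤ 2 := by
    have h1 : (⌈1 / dt⌉₊ : ℝ) < 1 / dt + 1 := Nat.ceil_lt_add_one (by positivity)
    have h2 : (1 / dt + 1) * dt = 1 + dt := by field_simp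
    rw [← hk]
    nlinarith
  refine ⟨k + 1, k.succ_pos, hT2, ?_⟩
  -- a function with values in `[0,1]` whose mean over the cell is at least `1/2` is lifted to `≥ ε`
  have main : ∀ φ : En n → ℝ, BM φ → Per L φ → (∀ q, 0 ≤ φ q) → (∀ q, φ q ≤ 1) →
      volume.real (Box n L) / 2 ≤ ∫ q in Box n L, φ q →
      ∀ q, ε ≤ (Pmala V dt)^[k + 1] φ q := by
    intro φ hφ hφp h0 h1 hmean q
    have hcmp := iter_compare (C := C) hVc hgc hdt (fun g hg x =>
      step_compare hM0 hG hlip htay hVc hgc hdt hcc hC hsmall hg x) hφ k q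
    have hlow := hH _ hT1 hT2 φ hφ.1 hφp h0 h1 q
    have hm := iter_mono hVc hgc hdt (hφ.mul hφ) hφ
      (fun q => mul_le_of_le_one_left (h0 q) (h1 q)) (k + 1) q
    have h2 : (c * (volume.real (Box n L) / 2)) ^ 2 ≤ (Hop ((k + 1 : ℕ) * dt) φ q) ^ 2 :=
      pow_le_pow_left₀ (by positivity) ((mul_le_mul_of_nonneg_left hmean hc.le).trans hlow) 2
    refine (min_le_right _ _).trans ?_
    rw [Real.exp_neg, inv_mul_le_iff₀ (Real.exp_pos _)]
    have hP0 := (iter_bounds hVc hgc hdt (hφ.mul hφ) (fun q => mul_self_nonneg (φ q))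
      (fun q => mul_le_one₀ (h1 q) (h0 q) (h1 q)) (k + 1) q).1
    calc _ ≤ _ := h2.trans hcmp
      _ ≤ Real.exp (C * 2) * (Pmala V dt)^[k + 1] (fun q => φ q * φ q) q :=
        mul_le_mul_of_nonneg_right (Real.exp_le_exp.2 (mul_le_mul_of_nonneg_left hT2 hC0)) hP0
      _ ≤ _ := mul_le_mul_of_nonneg_left hm (Real.exp_pos _).le
  intro f hf hfp a b ha hb
  rcases (le_trans (ha 0) (hb 0)).eq_or_lt with hab | hab
  · refine ⟨a, b, by rw [hab]; simp, fun q => iter_bounds hVc hgc hdt hf ha hb (k + 1) q⟩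
  have hba : 0 < b - a := sub_pos.2 hab
  set φ : En n → ℝ := fun q => (b - a)⁻¹ * (f q - a) with hφd
  have hφ : BM φ := (BM.const _).mul (hf.sub (BM.const a))
  have hφp : Per L φ := fun q i => by simp only [hφd, hfp q i]
  have hφ0 : ∀ q, 0 ≤ φ q := fun q => mul_nonneg (inv_pos.2 hba).le (sub_nonneg.2 (ha q))
  have hφ1 : ∀ q, φ q ≤ 1 := fun q => by
    simp only [hφd]; rw [inv_mul_le_iff₀ hba]; linarith [hb q]
  have hψ : BM fun q => 1 - φ q := (BM.const 1).sub hφ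
  have hI : ∀ {h : En n → ℝ}, BM h → IntegrableOn h (Box n L) := fun {h} ⟨hm, B, hB⟩ =>
    Measure.integrableOn_of_bounded (M := B) (box_fin hL).ne hm.aestronglyMeasurable
      (Filter.Eventually.of_forall hB)
  have hsum : ∫ q in Box n L, (1 - φ q) = volume.real (Box n L) - ∫ q in Box n L, φ q := by
    rw [integral_sub (hI (BM.const 1)) (hI hφ)]; simp
  rcases le_total (volume.real (Box n L) / 2) (∫ q in Box n L, φ q) with hc1 | hc2
  · have h := main φ hφ hφp hφ0 hφ1 hc1
    have hf' : f = fun q => a + (b - a) * φ q := by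
      funext q; simp only [hφd]; field_simp; ring
    refine ⟨a + (b - a) * ε, b, by nlinarith, fun q => ⟨?_, (iter_bounds hVc hgc hdt hf ha hb (k + 1) q).2⟩⟩
    rw [hf', iter_affine hVc hgc hdt hφ]
    have := mul_le_mul_of_nonneg_left (h q) hba.le
    simp only; linarith
  · have h := main (fun q => 1 - φ q) hψ (fun q i => by simp only [hφp q i])
      (fun q => sub_nonneg.2 (hφ1 q)) (fun q => by linarith [hφ0 q]) (by rw [hsum]; linarith)
    have hf' : f = fun q => b + (-(b - a)) * (1 - φ q) := by
      funext q; simp only [hφd]; field_simp; ring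
    refine ⟨a, b - (b - a) * ε, by nlinarith, fun q => ⟨(iter_bounds hVc hgc hdt hf ha hb (k + 1) q).1, ?_⟩⟩
    rw [hf', iter_affine hVc hgc hdt hψ]
    have := mul_le_mul_of_nonneg_left (h q) hba.le
    simp only; linarith

end

/-- Geometric series in blocks of length `N`. -/
lemma sum_pow_div {r : ℝ} (hr0 : 0 ≤ r) (hr1 : r < 1) {N : ℕ} (hN : 0 < N) :
    Summable (fun k : ℕ => r ^ (k / N)) ∧ ∑' k : ℕ, r ^ (k / N) ≤ N / (1 - r) := by
  have hblock : ∀ m : ℕ, ∑ k ∈ Finset.range (N * m), r ^ (k / N) = N * ∑ j ∈ Finset.range m, r ^ j := by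
    intro m
    induction m with
    | zero => simp
    | succ m ih =>
      rw [Nat.mul_succ, Finset.sum_range_add, ih, Finset.sum_range_succ, mul_add]
      congr 1
      rw [Finset.sum_congr rfl (g := fun _ => r ^ m)]
      · simp
      · intro j hj
        rw [Nat.mul_add_div hN, Nat.div_eq_of_lt (Finset.mem_range.1 hj), add_zero]
  have hpart : ∀ m : ℕ, ∑ k ∈ Finset.range m, r ^ (k / N) ≤ N / (1 - r) := by
    intro m
    calc _ ≤ ∑ k ∈ Finset.range (N * m), r ^ (k / N) :=
          Finset.sum_le_sum_of_subset_of_nonneg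
            (Finset.range_mono (Nat.le_mul_of_pos_left m hN)) (fun _ _ _ => by positivity)
      _ = N * ∑ j ∈ Finset.range m, r ^ j := hblock m
      _ ≤ N * (1 - r)⁻¹ := by
          refine mul_le_mul_of_nonneg_left ?_ (Nat.cast_nonneg N)
          rw [← tsum_geometric_of_lt_one hr0 hr1]
          exact (summable_geometric_of_lt_one hr0 hr1).sum_le_tsum _ (fun _ _ => by positivity)
      _ = _ := by rw [div_eq_mul_inv]
  exact ⟨summable_of_sum_range_le (fun _ => by positivity) hpart,
    Real.tsum_le_of_sum_range_le (fun _ => by positivity) hpart⟩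

theorem stmt7 (n : ℕ) (hn : 1 ≤ n) (L : ℝ) (hL : 0 < L)
    (V : En n → ℝ) (hV : ContDiff ℝ (⊤ : ℕ∞) V)
    (hper : ∀ (q : En n) (i : Fin n), V (q + L • EuclideanSpace.single i (1 : ℝ)) = V q) :
    ∃ K > (0 : ℝ), ∃ dts > (0 : ℝ), ∀ dt : ℝ, 0 < dt → dt ≤ dts →
      ∀ f : En n → ℝ, Measurable f →
        (∀ (q : En n) (i : Fin n), f (q + L • EuclideanSpace.single i (1 : ℝ)) = f q) →
        muInt V L f = 0 → (∃ B : ℝ, ∀ q, |f q| ≤ B) →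
        ∃ g : En n → ℝ,
          TendstoUniformly (fun (N : ℕ) (q : En n) =>
              ∑ k ∈ Finset.range N, (Pmala V dt)^[k] f q) g Filter.atTop ∧
          (∀ q, g q - Pmala V dt g q = f q) ∧
          muInt V L g = 0 ∧
          (∀ B : ℝ, (∀ q, |f q| ≤ B) → ∀ q, dt * |g q| ≤ K * B) := by
  have hVp : Per L V := hper
  have hVc := hV.continuous
  have hgc := (gradient_contDiff hV).continuous
  obtain ⟨ε, hε0, hε1, dts, hdts, hcontr⟩ := contraction hL hV hVp
  refine ⟨4 / ε, by positivity, dts, hdts, fun dt hdt hle f hfm hfper hmu hfb => ?_⟩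
  have hfp : Per L f := hfper
  have hf : BM f := ⟨hfm, hfb⟩
  obtain ⟨N, hN, hNdt, hcon⟩ := hcontr dt hdt hle
  obtain ⟨hsm, hts⟩ := sum_pow_div (r := 1 - ε) (by linarith) (by linarith) hN
  rw [sub_sub_cancel] at hts
  have hI : ∀ {h : En n → ℝ}, BM h → IntegrableOn h (Box n L) := fun {h} ⟨hm, B, hB⟩ =>
    Measure.integrableOn_of_bounded (M := B) (box_fin hL).ne hm.aestronglyMeasurable
      (Filter.Eventually.of_forall hB)
  obtain ⟨CV, -, hCV⟩ := hVp.bounded hL hVc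
  have hE : BM (fun q : En n => Real.exp (-V q)) :=
    ⟨Real.measurable_exp.comp hVc.measurable.neg, Real.exp CV, fun q => by
      rw [abs_of_pos (Real.exp_pos _)]
      exact Real.exp_le_exp.2 ((neg_le_abs _).trans (hCV q))⟩
  set Z := ∫ q in Box n L, Real.exp (-V q) with hZd
  have hZ : 0 < Z := by
    have h1 : ∫ q in Box n L, Real.exp (-CV) ≤ Z := by
      refine integral_mono (hI (BM.const _)) (hI hE) fun q => Real.exp_le_exp.2 ?_
      have := (le_abs_self (V q)).trans (hCV q)
      linarith
    have h2 : 0 < ∫ q in Box n L, Real.exp (-CV) := by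
      rw [setIntegral_const, smul_eq_mul]
      exact mul_pos (box_pos hL) (Real.exp_pos _)
    linarith
  have hmu0 : ∫ q in Box n L, f q * Real.exp (-V q) = 0 := by
    unfold muInt at hmu
    rcases mul_eq_zero.1 hmu with h | h
    · exact absurd h (inv_pos.2 hZ).ne'
    · exact h
  have hiter := iter_BM hVc hgc hdt hf
  -- geometric decay of the iterates in blocks of length `N`
  have hdecay : ∀ B : ℝ, (∀ q, |f q| ≤ B) → ∀ k q,
      ‖(Pmala V dt)^[k] f q‖ ≤ 2 * B * (1 - ε) ^ (k / N) := by
    intro B hB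
    have hblock : ∀ m : ℕ, ∃ a b : ℝ, b - a ≤ 2 * B * (1 - ε) ^ m ∧
        ∀ q, a ≤ (Pmala V dt)^[N * m] f q ∧ (Pmala V dt)^[N * m] f q ≤ b := by
      intro m
      induction m with
      | zero => exact ⟨-B, B, by simp; linarith, fun q => by simpa using abs_le.1 (hB q)⟩
      | succ m ih =>
        obtain ⟨a, b, hab, h⟩ := ih
        obtain ⟨a', b', hab', h'⟩ := hcon _ (hiter (N * m)) (iter_per hVp hfp _) a b
          (fun q => (h q).1) (fun q => (h q).2)
        refine ⟨a', b', hab'.trans ?_, fun q => ?_⟩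
        · calc _ ≤ (1 - ε) * (2 * B * (1 - ε) ^ m) :=
                mul_le_mul_of_nonneg_left hab (by linarith)
            _ = _ := by ring
        · rw [Nat.mul_succ, add_comm, Function.iterate_add_apply]; exact h' q
    intro k q
    obtain ⟨a, b, hab, h⟩ := hblock (k / N)
    have hk : ∀ q, a ≤ (Pmala V dt)^[k] f q ∧ (Pmala V dt)^[k] f q ≤ b := by
      intro q
      have := iter_bounds hVc hgc hdt (hiter (N * (k / N))) (fun q => (h q).1) (fun q => (h q).2)
        (k % N) q
      rwa [← Function.iterate_add_apply, Nat.mod_add_div] at this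
    have hmean := iter_invariant hL hVc hgc hVp hdt hf hfp k
    rw [hmu0] at hmean
    have ha0 : a ≤ 0 := by
      have : ∫ q in Box n L, a * Real.exp (-V q) ≤
          ∫ q in Box n L, (Pmala V dt)^[k] f q * Real.exp (-V q) :=
        integral_mono (hI ((BM.const a).mul hE)) (hI ((hiter k).mul hE)) fun q =>
          mul_le_mul_of_nonneg_right (hk q).1 (Real.exp_pos _).le
      rw [integral_const_mul, hmean] at this
      exact nonpos_of_mul_nonpos_left this hZ
    have hb0 : 0 ≤ b := by
      have : ∫ q in Box n L, (Pmala V dt)^[k] f q * Real.exp (-V q) ≤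
          ∫ q in Box n L, b * Real.exp (-V q) :=
        integral_mono (hI ((hiter k).mul hE)) (hI ((BM.const b).mul hE)) fun q =>
          mul_le_mul_of_nonneg_right (hk q).2 (Real.exp_pos _).le
      rw [integral_const_mul, hmean] at this
      exact nonneg_of_mul_nonneg_left this hZ
    refine le_trans ?_ hab
    rw [Real.norm_eq_abs, abs_le]
    constructor <;> linarith [(hk q).1, (hk q).2]
  have hgbound : ∀ B : ℝ, (∀ q, |f q| ≤ B) → ∀ q,
      |∑' k, (Pmala V dt)^[k] f q| ≤ 2 * B * (N / ε) := by
    intro B hB q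
    have hB0 : 0 ≤ B := (abs_nonneg _).trans (hB 0)
    refine (tsum_of_norm_bounded (hsm.mul_left (2 * B)).hasSum (fun k => hdecay B hB k q)).trans ?_
    rw [tsum_mul_left]
    exact mul_le_mul_of_nonneg_left hts (by positivity)
  obtain ⟨B₀, hB₀⟩ := hfb
  set g : En n → ℝ := fun q => ∑' k, (Pmala V dt)^[k] f q with hg
  set S : ℕ → En n → ℝ := fun m q => ∑ k ∈ Finset.range m, (Pmala V dt)^[k] f q with hS
  have hunif : TendstoUniformly S g Filter.atTop :=
    tendstoUniformly_tsum_nat (hsm.mul_left (2 * B₀)) (hdecay B₀ hB₀)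
  have hSBM : ∀ m, BM (S m) := by
    intro m
    induction m with
    | zero => simpa [hS] using BM.const (n := n) 0
    | succ m ih =>
      have : S (m + 1) = fun q => S m q + (Pmala V dt)^[m] f q := by
        funext q; simp only [hS]; rw [Finset.sum_range_succ]
      rw [this]; exact ih.add (hiter m)
  have hgBM : BM g := by
    refine ⟨measurable_of_tendsto_metrizable (fun m => (hSBM m).1)
      (tendsto_pi_nhds.2 fun q => hunif.tendsto_at q), _, hgbound B₀ hB₀⟩
  have hPS : ∀ m q, Pmala V dt (S m) q = S (m + 1) q - f q := by
    intro m q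
    have h1 : S (m + 1) q - f q = ∑ k ∈ Finset.range m, (Pmala V dt)^[k + 1] f q := by
      simp only [hS]; rw [Finset.sum_range_succ']; simp
    rw [h1]
    clear h1
    induction m with
    | zero =>
      have : S 0 = fun _ => 0 := by funext q; simp [hS]
      rw [this, Pmala_const]; simp
    | succ m ih =>
      have : S (m + 1) = fun q => S m q + (Pmala V dt)^[m] f q := by
        funext q; simp only [hS]; rw [Finset.sum_range_succ]
      rw [this, Pmala_add hVc hgc hdt (hSBM m) (hiter m), ih, Finset.sum_range_succ,
        Function.iterate_succ_apply']
  have hclose : ∀ δ > 0, ∃ m, (∀ q, |g q - S m q| ≤ δ) ∧ ∀ q, |g q - S (m + 1) q| ≤ δ := by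
    intro δ hδ
    obtain ⟨m, hm⟩ := Filter.eventually_atTop.1 (Metric.tendstoUniformly_iff.1 hunif δ hδ)
    exact ⟨m, fun q => (hm m le_rfl q).le, fun q => (hm (m + 1) (Nat.le_succ m) q).le⟩
  refine ⟨g, hunif, fun q => ?_, ?_, fun B hB q => ?_⟩
  · refine eq_of_abs_sub_le_all fun δ hδ => ?_
    obtain ⟨m, hm, hm1⟩ := hclose (δ / 2) (by positivity)
    have h1 := hm1 q
    have h2 : Pmala V dt g q ≤ Pmala V dt (S m) q + δ / 2 := by
      have := Pmala_mono hVc hgc hdt hgBM ((hSBM m).add (BM.const (δ / 2)))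
        (fun q => by linarith [(abs_le.1 (hm q)).2]) q
      rwa [Pmala_add hVc hgc hdt (hSBM m) (BM.const _), Pmala_const] at this
    have h3 : Pmala V dt (S m) q ≤ Pmala V dt g q + δ / 2 := by
      have := Pmala_mono hVc hgc hdt (hSBM m) (hgBM.add (BM.const (δ / 2)))
        (fun q => by linarith [(abs_le.1 (hm q)).1]) q
      rwa [Pmala_add hVc hgc hdt hgBM (BM.const _), Pmala_const] at this
    rw [hPS] at h2 h3
    rw [abs_le] at h1 ⊢
    constructor <;> linarith [h1.1, h1.2]
  · have hS0 : ∀ m, ∫ q in Box n L, S m q * Real.exp (-V q) = 0 := by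
      intro m
      simp only [hS, Finset.sum_mul]
      rw [integral_finsetSum _ fun k _ => hI ((hiter k).mul hE)]
      refine Finset.sum_eq_zero fun k _ => ?_
      rw [iter_invariant hL hVc hgc hVp hdt hf hfp k, hmu0]
    have hg0 : ∫ q in Box n L, g q * Real.exp (-V q) = 0 := by
      refine eq_of_abs_sub_le_all fun δ hδ => ?_
      obtain ⟨m, hm, -⟩ := hclose (δ / Z) (by positivity)
      rw [← hS0 m, ← integral_sub (hI (hgBM.mul hE)) (hI ((hSBM m).mul hE))]
      refine abs_integral_le_integral_abs.trans ?_
      calc _ ≤ ∫ q in Box n L, δ / Z * Real.exp (-V q) := by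
            refine integral_mono (hI ((hgBM.mul hE).sub ((hSBM m).mul hE))).abs
              (hI ((BM.const _).mul hE)) fun q => ?_
            show |g q * Real.exp (-V q) - S m q * Real.exp (-V q)| ≤ _
            rw [← sub_mul, abs_mul, abs_of_pos (Real.exp_pos _)]
            exact mul_le_mul_of_nonneg_right (hm q) (Real.exp_pos _).le
        _ = δ := by rw [integral_const_mul, ← hZd]; field_simp
    unfold muInt
    rw [hg0, mul_zero]
  · have hB0 : 0 ≤ B := (abs_nonneg _).trans (hB 0)
    calc dt * |g q| ≤ dt * (2 * B * (N / ε)) := mul_le_mul_of_nonneg_left (hgbound B hB q) hdt.le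
      _ = (N * dt) * (2 * B / ε) := by ring
      _ ≤ 2 * (2 * B / ε) := mul_le_mul_of_nonneg_right hNdt (by positivity)
      _ = 4 / ε * B := by ring
end
end
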